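/- arXiv:2111.12489 — 3 statements merged into one kernel-verified Lean document; each statement's English description precedes it below -/
import Mathlib

section
/- Let p be an odd prime, s ≥ 1, and 0 ≤ i < j ≤ p^s. Then the minimum distance of C_{i,j}(2p^s, λ_0) equals the minimum of the set {2V_t : i ≤ t ≤ j − 1} ∪ {V_t : j ≤ t ≤ p^s − 1} (the second set being empty when j = p^s). -/
open Polynomial

variable {F : Type} [Field F] [Fintype F] [DecidableEq F]

/-- `d` is the minimum distance (minimum Hamming weight of a nonzero codeword) of `Cset`. -/
def minDistIs {n : ℕ} (Cset : Set (Fin n → F)) (d : ℕ) : Prop :=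
  IsLeast {w : ℕ | ∃ c ∈ Cset, c ≠ 0 ∧ hammingNorm c = w} d

/-- The `i`-th code symbol of `Cset` has locality `r`. -/
def symbolLocality {n : ℕ} (Cset : Set (Fin n → F)) (i : Fin n) (r : ℕ) : Prop :=
  ∃ I : Finset (Fin n), i ∉ I ∧ I.card ≤ r ∧
    ∃ f : ({x : Fin n // x ∈ I} → F) → F, ∀ c ∈ Cset, c i = f (fun j => c j.1)

/-- `Cset` has all-symbol locality `r`. -/
def hasAllSymbolLocality {n : ℕ} (Cset : Set (Fin n → F)) (r : ℕ) : Prop :=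
  ∀ i : Fin n, symbolLocality Cset i r

/-- `r` is the minimum locality of `Cset`. -/
def minLocalityIs {n : ℕ} (Cset : Set (Fin n → F)) (r : ℕ) : Prop :=
  IsLeast {r' : ℕ | hasAllSymbolLocality Cset r'} r

/-- The λ-constacyclic code of length `n` corresponding to the ideal generated by (the image of)
`g` in `F[x]/⟨x^n − λ⟩`, viewed as a set of vectors via the coefficient identification. -/
def codeOfGen (n : ℕ) (lam : F) (g : F[X]) : Set (Fin n → F) :=
  {c | (∑ j : Fin n, Polynomial.C (c j) * X ^ (j : ℕ)) ∈ Ideal.span {g, X ^ n - Polynomial.C lam}}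

/-- The code `C_i(η, p^s, λ₀)`: the λ-constacyclic code of length `η p^s`
generated by `(x^η − λ₀)^i`, where `λ = λ₀^{p^s}`. -/
def Ci (p η s i : ℕ) (lam0 : F) : Set (Fin (η * p ^ s) → F) :=
  codeOfGen (η * p ^ s) (lam0 ^ p ^ s) ((X ^ η - Polynomial.C lam0) ^ i)

/-- The code `C_{i,j}(2p^s, λ₀)` with `λ₀ = δ²`: the λ-constacyclic code of length `2 p^s`
generated by `(x − δ)^i (x + δ)^j`, where `λ = λ₀^{p^s}`. -/
def Cij (p s i j : ℕ) (δ : F) : Set (Fin (2 * p ^ s) → F) :=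
  codeOfGen (2 * p ^ s) ((δ ^ 2) ^ p ^ s) ((X - Polynomial.C δ) ^ i * (X + Polynomial.C δ) ^ j)

/-- `V_t = Π_j (t_j + 1)` over the base-`p` digits `t_j` of `t`. -/
def Vdig (p t : ℕ) : ℕ := ((Nat.digits p t).map (· + 1)).prod

/-- Ceiling division `⌈a / b⌉` of natural numbers. -/
def nceil (a b : ℕ) : ℕ := (a + b - 1) / b

/-- `Cset` is an optimal LRC: for its dimension `k`, minimum distance `d` and minimum
locality `r`, the Singleton-like bound `d = n − k − ⌈k/r⌉ + 2` is met with equality. -/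
def optimalLRC {n : ℕ} (Cset : Set (Fin n → F)) : Prop :=
  ∃ k d r : ℕ, Nat.card Cset = Fintype.card F ^ k ∧ minDistIs Cset d ∧
    minLocalityIs Cset r ∧ (d : ℤ) = (n : ℤ) - (k : ℤ) - (nceil k r : ℤ) + 2

/-!
Codewords of `C_{i,j}` are the polynomials of degree `< 2p^s` divisible by `(x - δ)^i (x + δ)^j`,
and the Hamming weight is the number of monomials.

*Upper bound.* By Frobenius, `(x - c)^t` has at most `V_t` monomials. Hence for `t ≥ j` the
polynomial `(x^2 - δ^2)^t` has weight at most `V_t`, and for `i ≤ t < j` the polynomial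
`(x - δ)^t (x + δ)^(p^s) = (x - δ)^t (x^(p^s) + δ^(p^s))` has weight at most `2 V_t`.

*Lower bound.* Write `f = ∑_{r < p} x^r f_r(x^p)`. If `c ≠ 0` is a root of `f` of multiplicity `a`,
then more than `a % p` of the `f_r` are nonzero, and each of them vanishes at `c^p` to order at
least `a / p`. Passing to the nonzero `f_r` with fewest monomials, an induction on `s` builds up,
digit by digit, an exponent `t` with `V_t` or `2 V_t` at most the weight of `f`.
-/

section DigitProduct

lemma Vdig_zero (p : ℕ) : Vdig p 0 = 1 := by
  simp [Vdig]

lemma Vdig_mul_add {p : ℕ} (hp : 1 < p) (t : ℕ) {a : ℕ} (ha : a < p) :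
    Vdig p (p * t + a) = (a + 1) * Vdig p t := by
  by_cases h : a ≠ 0 ∨ t ≠ 0
  · simp [Vdig, add_comm (p * t), Nat.digits_add p hp a t ha h]
  · obtain ⟨rfl, rfl⟩ : a = 0 ∧ t = 0 := by tauto
    simp

end DigitProduct

section SparsePowers

lemma card_support_expand_le {R : Type*} [CommSemiring R] {n : ℕ} (hn : 0 < n) (f : R[X]) :
    (expand R n f).support.card ≤ f.support.card := by
  suffices (expand R n f).support ⊆ f.support.image (· * n) from
    (Finset.card_le_card this).trans Finset.card_image_le
  intro k hk
  rw [mem_support_iff, coeff_expand hn] at hk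
  obtain ⟨hdvd, hcoeff⟩ := ite_ne_right_iff.mp hk
  exact Finset.mem_image.mpr ⟨k / n, mem_support_iff.mpr hcoeff, Nat.div_mul_cancel hdvd⟩

lemma card_support_X_pow_add_C_le {R : Type*} [Semiring R] (n : ℕ) (a : R) :
    (X ^ n + C a).support.card ≤ 2 :=
  calc (X ^ n + C a).support.card
      ≤ (X ^ n : R[X]).support.card + (C a).support.card :=
        (Finset.card_le_card support_add).trans (Finset.card_union_le _ _)
    _ ≤ 1 + 1 := by
        gcongr
        · simpa using card_support_C_mul_X_pow_le_one (c := (1 : R)) (n := n)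
        · simpa using card_support_C_mul_X_pow_le_one (c := a) (n := 0)

variable {R : Type*} [CommRing R] {p : ℕ} [hp : Fact p.Prime] [CharP R p]

lemma X_sub_C_pow_char_mul (c : R) (t : ℕ) :
    (X - C c) ^ (p * t) = expand R p ((X - C (c ^ p)) ^ t) := by
  rw [pow_mul, sub_pow_char]
  simp

lemma card_support_X_sub_C_pow_le_Vdig (c : R) (t : ℕ) :
    ((X - C c) ^ t).support.card ≤ Vdig p t := by
  induction t using Nat.strong_induction_on generalizing c with
  | _ t ih =>
    rcases t.eq_zero_or_pos with rfl | ht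
    · simpa [Vdig_zero] using card_supp_le_succ_natDegree (1 : R[X])
    · have hdeg : ((X - C c) ^ (t % p)).natDegree ≤ t % p := by
        simpa using natDegree_pow_le_of_le (t % p) (natDegree_X_sub_C_le c)
      have low_digit : ((X - C c) ^ (t % p)).support.card ≤ t % p + 1 :=
        (card_supp_le_succ_natDegree _).trans (Nat.succ_le_succ hdeg)
      have high_digits : (expand R p ((X - C (c ^ p)) ^ (t / p))).support.card ≤ Vdig p (t / p) :=
        (card_support_expand_le hp.out.pos _).trans
          (ih (t / p) (Nat.div_lt_self ht hp.out.one_lt) (c ^ p))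
      rw [← Nat.div_add_mod t p, Vdig_mul_add hp.out.one_lt _ (Nat.mod_lt _ hp.out.pos), pow_add,
        X_sub_C_pow_char_mul, mul_comm (t % p + 1)]
      exact card_support_mul_le.trans (Nat.mul_le_mul high_digits low_digit)

end SparsePowers

section ExponentResidues

/-- The set of residues modulo `p` of the exponents occurring in `f`; its cardinality is the number
of nonzero terms in the decomposition `f = ∑_{r < p} x^r f_r(x^p)`. -/
def exponentResidues {R : Type*} [Semiring R] (p : ℕ) (f : R[X]) : Finset ℕ :=
  f.support.image (· % p)

variable {R : Type*} [CommRing R]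

lemma coeff_X_mul_derivative_sub (f : R[X]) (b : R) (n : ℕ) :
    (X * derivative f - C b * f).coeff n = (n - b) * f.coeff n := by
  cases n with
  | zero => simp
  | succ n =>
    simp only [coeff_sub, coeff_X_mul, coeff_derivative, coeff_C_mul]
    push_cast
    ring

lemma exponentResidues_X_mul_derivative_sub_subset {p : ℕ} [CharP R p] (f : R[X])
    (n : ℕ) :
    exponentResidues p (X * derivative f - C (n : R) * f) ⊆
      (exponentResidues p f).erase (n % p) := by
  intro r hr
  obtain ⟨k, hk, rfl⟩ := Finset.mem_image.mp hr
  rw [mem_support_iff, coeff_X_mul_derivative_sub] at hk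
  have hkn : k % p ≠ n % p := fun h ↦
    left_ne_zero_of_mul hk (sub_eq_zero.mpr ((CharP.natCast_eq_natCast R p).mpr h))
  exact Finset.mem_erase.mpr
    ⟨hkn, Finset.mem_image_of_mem _ (mem_support_iff.mpr (right_ne_zero_of_mul hk))⟩

variable [IsDomain R]

lemma emultiplicity_X_mul_derivative_sub {c : R} (hc : c ≠ 0) {a : ℕ} (ha : ((a + 1 : ℕ) : R) ≠ 0)
    {f : R[X]} (hf : emultiplicity (X - C c) f = (a + 1 : ℕ)) (b : R) :
    emultiplicity (X - C c) (X * derivative f - C b * f) = a := by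
  obtain ⟨⟨q, rfl⟩, hndvd⟩ := emultiplicity_eq_coe.mp hf
  have hq : q.eval c ≠ 0 := fun h ↦
    hndvd (by rw [pow_succ _ (a + 1)]; exact mul_dvd_mul_left _ (dvd_iff_isRoot.mpr h))
  set v := C ((a + 1 : ℕ) : R) * X * q + (X - C c) * (X * derivative q - C b * q) with hv_def
  have hv : v.eval c ≠ 0 := by simpa [hv_def, hc, hq] using ha
  have factor : X * derivative ((X - C c) ^ (a + 1) * q) - C b * ((X - C c) ^ (a + 1) * q) =
      (X - C c) ^ a * v := by
    simp only [hv_def, derivative_mul, derivative_X_sub_C_pow, Nat.add_sub_cancel]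
    ring
  rw [factor, emultiplicity_eq_coe, pow_succ,
    mul_dvd_mul_iff_left (pow_ne_zero a (X_sub_C_ne_zero c)), dvd_iff_isRoot]
  exact ⟨dvd_mul_right _ _, hv⟩

variable {p : ℕ} [CharP R p]

-- `x d/dx - n` removes the residue of `n` and lowers the multiplicity of the root `c` by one,
-- as long as that multiplicity is not divisible by `p`.
lemma lt_card_exponentResidues_of_emultiplicity_eq {c : R} (hc : c ≠ 0) {m k : ℕ} (hk : k < p)
    {f : R[X]} (hf : emultiplicity (X - C c) f = (p * m + k : ℕ)) :
    k < (exponentResidues p f).card := by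
  induction k generalizing f with
  | zero =>
    have hf0 : f ≠ 0 := (finiteMultiplicity_of_emultiplicity_eq_natCast hf).ne_zero
    exact Finset.card_pos.mpr ((nonempty_support_iff.mpr hf0).image _)
  | succ k ih =>
    have hf0 : f ≠ 0 := (finiteMultiplicity_of_emultiplicity_eq_natCast hf).ne_zero
    obtain ⟨n, hn⟩ := nonempty_support_iff.mpr hf0
    have not_dvd : ¬ p ∣ p * m + k + 1 := fun h ↦
      Nat.not_dvd_of_pos_of_lt k.succ_pos hk ((Nat.dvd_add_right (dvd_mul_right p m)).mp h)
    have lower_order := emultiplicity_X_mul_derivative_sub hc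
      (mt (CharP.cast_eq_zero_iff R p _).mp not_dvd) hf n
    calc k + 1
        < (exponentResidues p (X * derivative f - C (n : R) * f)).card + 1 :=
          Nat.succ_lt_succ (ih (Nat.lt_of_succ_lt hk) lower_order)
      _ ≤ ((exponentResidues p f).erase (n % p)).card + 1 := by
          gcongr
          exact exponentResidues_X_mul_derivative_sub_subset f n
      _ = (exponentResidues p f).card :=
          Finset.card_erase_add_one (Finset.mem_image_of_mem _ hn)

lemma rootMultiplicity_mod_lt_card_exponentResidues (hp : 0 < p) {c : R} (hc : c ≠ 0) {f : R[X]}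
    (hf : f ≠ 0) : f.rootMultiplicity c % p < (exponentResidues p f).card := by
  refine lt_card_exponentResidues_of_emultiplicity_eq (m := f.rootMultiplicity c / p) hc
    (Nat.mod_lt _ hp) ?_
  rw [Nat.div_add_mod, emultiplicity_eq_coe, ← le_rootMultiplicity_iff hf,
    ← le_rootMultiplicity_iff hf]
  exact ⟨le_rfl, Nat.not_succ_le_self _⟩

end ExponentResidues

section ResiduePart

/-- The polynomial `f_r` in the decomposition `f = ∑_{r < p} x^r f_r(x^p)`. It is obtained by
contracting `x^(p - r) f` instead of `f / x^r`, so that multiplicativity of `contract` applies. -/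
noncomputable def residuePart {R : Type*} [CommSemiring R] (p r : ℕ) (f : R[X]) : R[X] :=
  divX (contract p (X ^ (p - r) * f))

variable {R : Type*} [CommSemiring R] {p r : ℕ}

lemma coeff_residuePart (hr : r < p) (f : R[X]) (n : ℕ) :
    (residuePart p r f).coeff n = f.coeff (p * n + r) := by
  have index : (n + 1) * p = (p * n + r) + (p - r) := by
    rw [add_mul, mul_comm]
    omega
  rw [residuePart, coeff_divX, coeff_contract (by omega), index, coeff_X_pow_mul]

lemma residuePart_mul_X (hr : r < p) (f : R[X]) :
    residuePart p r f * X = contract p (X ^ (p - r) * f) := by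
  have constant_coeff : (contract p (X ^ (p - r) * f)).coeff 0 = 0 := by
    rw [coeff_contract (by omega), zero_mul, coeff_X_pow_mul', if_neg (by omega)]
  rw [residuePart, ← add_zero (divX _ * X), ← C_0, ← constant_coeff, divX_mul_X_add]

lemma residuePart_mul_expand (hr : r < p) (f g : R[X]) :
    residuePart p r (f * expand R p g) = residuePart p r f * g := by
  suffices residuePart p r (f * expand R p g) * X = residuePart p r f * g * X by
    ext n
    simpa only [coeff_mul_X] using congrArg (coeff · (n + 1)) this
  rw [residuePart_mul_X hr, ← mul_assoc, contract_mul_expand (by omega), ← residuePart_mul_X hr]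
  ring

lemma residuePart_ne_zero (hr : r < p) {f : R[X]} (h : r ∈ exponentResidues p f) :
    residuePart p r f ≠ 0 := by
  obtain ⟨n, hn, rfl⟩ := Finset.mem_image.mp h
  have hcoeff : (residuePart p (n % p) f).coeff (n / p) ≠ 0 := by
    rw [coeff_residuePart hr, Nat.div_add_mod]
    exact mem_support_iff.mp hn
  exact fun h0 ↦ hcoeff (by rw [h0, coeff_zero])

lemma card_support_residuePart (hr : r < p) (f : R[X]) :
    (residuePart p r f).support.card = (f.support.filter (· % p = r)).card := by
  refine Finset.card_nbij' (p * · + r) (· / p) ?_ ?_ ?_ ?_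
  · intro n hn
    have hcoeff : f.coeff (p * n + r) ≠ 0 := by
      rw [← coeff_residuePart hr]
      exact mem_support_iff.mp hn
    simpa [Nat.mod_eq_of_lt hr] using hcoeff
  · intro n hn
    obtain ⟨hsupp, hmod⟩ := Finset.mem_filter.mp hn
    rw [Finset.mem_coe, mem_support_iff, coeff_residuePart hr, ← hmod, Nat.div_add_mod]
    exact mem_support_iff.mp hsupp
  · intro n _
    simp [Nat.mul_add_div (Nat.zero_lt_of_lt hr), Nat.div_eq_of_lt hr]
  · intro n hn
    obtain ⟨-, rfl⟩ := Finset.mem_filter.mp hn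
    exact Nat.div_add_mod n p

lemma natDegree_residuePart_lt (hr : r < p) {f : R[X]} (h : residuePart p r f ≠ 0) {n : ℕ}
    (hf : f.natDegree < p * n) : (residuePart p r f).natDegree < n := by
  have hlead : f.coeff (p * (residuePart p r f).natDegree + r) ≠ 0 := by
    rw [← coeff_residuePart hr]
    exact leadingCoeff_ne_zero.mpr h
  have hle := le_natDegree_of_ne_zero hlead
  exact lt_of_mul_lt_mul_left (by omega : p * _ < p * n) (Nat.zero_le p)

lemma exists_residuePart_card_exponentResidues_mul_le (hp : 0 < p) {f : R[X]} (hf : f ≠ 0) :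
    ∃ r < p, residuePart p r f ≠ 0 ∧
      (exponentResidues p f).card * (residuePart p r f).support.card ≤ f.support.card := by
  have residue_lt : ∀ r ∈ exponentResidues p f, r < p := fun r hr ↦ by
    obtain ⟨n, -, rfl⟩ := Finset.mem_image.mp hr
    exact Nat.mod_lt n hp
  obtain ⟨r, hr, hmin⟩ := Finset.exists_min_image (exponentResidues p f)
    (fun r ↦ (residuePart p r f).support.card) ((nonempty_support_iff.mpr hf).image _)
  refine ⟨r, residue_lt r hr, residuePart_ne_zero (residue_lt r hr) hr, ?_⟩
  rw [mul_comm]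
  exact Finset.mul_card_image_le_card _ _ fun r' hr' ↦
    (hmin r' hr').trans_eq (card_support_residuePart (residue_lt r' hr') f)

lemma rootMultiplicity_div_le_rootMultiplicity_residuePart {R : Type*} [CommRing R]
    [Fact p.Prime] [CharP R p] (hr : r < p) {f : R[X]} (h : residuePart p r f ≠ 0) (c : R) :
    f.rootMultiplicity c / p ≤ (residuePart p r f).rootMultiplicity (c ^ p) := by
  have hdvd : (X - C c) ^ (p * (f.rootMultiplicity c / p)) ∣ f :=
    (pow_dvd_pow _ (Nat.mul_div_le _ _)).trans (pow_rootMultiplicity_dvd f c)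
  rw [X_sub_C_pow_char_mul] at hdvd
  obtain ⟨g, hg⟩ := hdvd
  rw [le_rootMultiplicity_iff h]
  exact ⟨residuePart p r g, by
    rw [mul_comm, ← residuePart_mul_expand hr, mul_comm g, ← hg]⟩

end ResiduePart

section WeightLowerBound

lemma le_mul_add_of_div_le_of_mod_le {a n t k : ℕ} (hdiv : a / n ≤ t) (hmod : a % n ≤ k) :
    a ≤ n * t + k :=
  calc a = n * (a / n) + a % n := (Nat.div_add_mod a n).symm
    _ ≤ n * t + k := by gcongr

variable {K : Type*} [Field K]

lemma rootMultiplicity_add_rootMultiplicity_le_natDegree {α β : K} (hαβ : α ≠ β) {f : K[X]}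
    (hf : f ≠ 0) : f.rootMultiplicity α + f.rootMultiplicity β ≤ f.natDegree := by
  have hcoprime : IsCoprime ((X - C α) ^ f.rootMultiplicity α)
      ((X - C β) ^ f.rootMultiplicity β) :=
    (isCoprime_X_sub_C_of_isUnit_sub (sub_ne_zero.mpr hαβ).isUnit).pow
  have hdvd := hcoprime.mul_dvd (pow_rootMultiplicity_dvd f α) (pow_rootMultiplicity_dvd f β)
  simpa [natDegree_mul, X_sub_C_ne_zero] using natDegree_le_of_dvd hdvd hf

lemma max_rootMultiplicity_eq_zero_or_two_le_card_support {α β : K} (hα : α ≠ 0) (hβ : β ≠ 0)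
    (hαβ : α ≠ β) {f : K[X]} (hf : f ≠ 0) (hdeg : f.natDegree < 2) :
    max (f.rootMultiplicity α) (f.rootMultiplicity β) = 0 ∨
      min (f.rootMultiplicity α) (f.rootMultiplicity β) = 0 ∧ 2 ≤ f.support.card := by
  have hsum := rootMultiplicity_add_rootMultiplicity_le_natDegree hαβ hf
  have two_le {c : K} (hc : c ≠ 0) (hroot : 0 < f.rootMultiplicity c) : 2 ≤ f.support.card := by
    by_contra! hlt
    obtain ⟨n, a, rfl⟩ := card_support_le_one_iff_monomial.mp (Nat.le_of_lt_succ hlt)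
    have ha : a ≠ 0 := fun h ↦ hf (by rw [h, monomial_zero_right])
    simpa [IsRoot, hc, ha] using (rootMultiplicity_pos hf).mp hroot
  rcases Nat.eq_zero_or_pos (f.rootMultiplicity α) with hα0 | hαpos
  · rcases Nat.eq_zero_or_pos (f.rootMultiplicity β) with hβ0 | hβpos
    · exact .inl (by omega)
    · exact .inr ⟨by omega, two_le hβ hβpos⟩
  · exact .inr ⟨by omega, two_le hα hαpos⟩

variable {p : ℕ} [hp : Fact p.Prime] [CharP K p]

lemma exists_Vdig_le_card_support {α β : K} (hα : α ≠ 0) (hβ : β ≠ 0) (hαβ : α ≠ β) (s : ℕ)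
    {f : K[X]} (hf : f ≠ 0) (hdeg : f.natDegree < 2 * p ^ s) :
    ∃ t < p ^ s,
      (max (f.rootMultiplicity α) (f.rootMultiplicity β) ≤ t ∧ Vdig p t ≤ f.support.card) ∨
      (min (f.rootMultiplicity α) (f.rootMultiplicity β) ≤ t ∧ 2 * Vdig p t ≤ f.support.card) := by
  induction s generalizing α β f with
  | zero =>
    have hcard : 0 < f.support.card := Finset.card_pos.mpr (nonempty_support_iff.mpr hf)
    obtain hmax | ⟨hmin, htwo⟩ :=
      max_rootMultiplicity_eq_zero_or_two_le_card_support hα hβ hαβ hf hdeg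
    · exact ⟨0, by simp, .inl ⟨hmax.le, by rwa [Vdig_zero]⟩⟩
    · exact ⟨0, by simp, .inr ⟨hmin.le, by rwa [Vdig_zero]⟩⟩
  | succ s ih =>
    obtain ⟨r, hr, hg, hweight⟩ := exists_residuePart_card_exponentResidues_mul_le hp.out.pos hf
    have hgdeg := natDegree_residuePart_lt (n := 2 * p ^ s) hr hg
      (by rwa [mul_left_comm, ← pow_succ'])
    obtain ⟨t, ht, hcases⟩ := ih (pow_ne_zero p hα) (pow_ne_zero p hβ)
      (fun h ↦ hαβ (frobenius_inj K p h)) hg hgdeg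
    have hgα := rootMultiplicity_div_le_rootMultiplicity_residuePart hr hg α
    have hgβ := rootMultiplicity_div_le_rootMultiplicity_residuePart hr hg β
    set a := f.rootMultiplicity α
    set b := f.rootMultiplicity β
    set k := max (a % p) (b % p)
    have hk : k < (exponentResidues p f).card :=
      max_lt (rootMultiplicity_mod_lt_card_exponentResidues hp.out.pos hα hf)
        (rootMultiplicity_mod_lt_card_exponentResidues hp.out.pos hβ hf)
    have hkp : k < p := max_lt (Nat.mod_lt _ hp.out.pos) (Nat.mod_lt _ hp.out.pos)
    have ha (h : a / p ≤ t) : a ≤ p * t + k := le_mul_add_of_div_le_of_mod_le h (le_max_left _ _)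
    have hb (h : b / p ≤ t) : b ≤ p * t + k := le_mul_add_of_div_le_of_mod_le h (le_max_right _ _)
    have scale {w : ℕ} (hw : w ≤ (residuePart p r f).support.card) :
        (k + 1) * w ≤ f.support.card := (Nat.mul_le_mul hk hw).trans hweight
    refine ⟨p * t + k, ?_, ?_⟩
    · calc p * t + k < p * (t + 1) := by rw [mul_add_one]; omega
        _ ≤ p ^ (s + 1) := by rw [pow_succ']; gcongr; exact ht
    · rw [Vdig_mul_add hp.out.one_lt t hkp]
      refine hcases.imp (fun ⟨hmax, hV⟩ ↦ ?_) (fun ⟨hmin, hV⟩ ↦ ?_)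
      · obtain ⟨hαt, hβt⟩ := max_le_iff.mp hmax
        exact ⟨max_le (ha (hgα.trans hαt)) (hb (hgβ.trans hβt)), scale hV⟩
      · refine ⟨?_, by rw [mul_left_comm]; exact scale hV⟩
        exact min_le_iff.mpr ((min_le_iff.mp hmin).imp (ha <| hgα.trans ·) (hb <| hgβ.trans ·))

lemma exists_le_card_support_of_dvd {α β : K} (hα : α ≠ 0) (hβ : β ≠ 0) (hαβ : α ≠ β)
    {s i j : ℕ} (hij : i ≤ j) {f : K[X]} (hf : f ≠ 0) (hdeg : f.natDegree < 2 * p ^ s)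
    (hdvd : (X - C α) ^ i * (X - C β) ^ j ∣ f) :
    ∃ t, i ≤ t ∧ t < p ^ s ∧ (if t < j then 2 * Vdig p t else Vdig p t) ≤ f.support.card := by
  have hi : i ≤ f.rootMultiplicity α :=
    (le_rootMultiplicity_iff hf).mpr (dvd_of_mul_right_dvd hdvd)
  have hj : j ≤ f.rootMultiplicity β :=
    (le_rootMultiplicity_iff hf).mpr (dvd_of_mul_left_dvd hdvd)
  obtain ⟨t, ht, ⟨hmax, hV⟩ | ⟨hmin, hV⟩⟩ := exists_Vdig_le_card_support hα hβ hαβ s hf hdeg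
  · exact ⟨t, by omega, ht, by rwa [if_neg (by omega)]⟩
  · exact ⟨t, by omega, ht, by split_ifs <;> omega⟩

end WeightLowerBound

section WeightUpperBound

variable {R : Type*} [CommRing R] [IsDomain R] {p : ℕ} [Fact p.Prime] [CharP R p]

lemma exists_dvd_card_support_le_two_mul_Vdig (α β : R) {s i j t : ℕ} (hit : i ≤ t)
    (ht : t < p ^ s) (hj : j ≤ p ^ s) :
    ∃ f : R[X], f ≠ 0 ∧ f.natDegree < 2 * p ^ s ∧ (X - C α) ^ i * (X - C β) ^ j ∣ f ∧
      f.support.card ≤ 2 * Vdig p t := by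
  refine ⟨(X - C α) ^ t * (X - C β) ^ p ^ s, ?_, ?_, ?_, ?_⟩
  · exact mul_ne_zero (pow_ne_zero _ (X_sub_C_ne_zero α)) (pow_ne_zero _ (X_sub_C_ne_zero β))
  · simp only [natDegree_mul, ne_eq, pow_eq_zero_iff', X_sub_C_ne_zero, false_and,
      not_false_eq_true, natDegree_pow, natDegree_X_sub_C]
    omega
  · exact mul_dvd_mul (pow_dvd_pow _ hit) (pow_dvd_pow _ hj)
  · have binomial : (X - C β) ^ p ^ s = X ^ p ^ s + C (-β ^ p ^ s) := by
      rw [sub_pow_char_pow, C_neg, C_pow, sub_eq_add_neg]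
    rw [binomial, mul_comm 2]
    exact card_support_mul_le.trans
      (Nat.mul_le_mul (card_support_X_sub_C_pow_le_Vdig α t) (card_support_X_pow_add_C_le _ _))

lemma exists_dvd_card_support_le_Vdig (δ : R) {n i j t : ℕ} (hit : i ≤ t) (hjt : j ≤ t)
    (ht : t < n) :
    ∃ f : R[X], f ≠ 0 ∧ f.natDegree < 2 * n ∧ (X - C δ) ^ i * (X + C δ) ^ j ∣ f ∧
      f.support.card ≤ Vdig p t := by
  refine ⟨expand R 2 ((X - C (δ ^ 2)) ^ t), ?_, ?_, ?_, ?_⟩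
  · exact (expand_ne_zero two_pos).mpr (pow_ne_zero _ (X_sub_C_ne_zero _))
  · rw [natDegree_expand, natDegree_pow, natDegree_X_sub_C]
    omega
  · have factor : expand R 2 ((X - C (δ ^ 2)) ^ t) = (X - C δ) ^ t * (X + C δ) ^ t := by
      rw [← mul_pow, map_pow, map_sub, expand_X, expand_C, C_pow]
      ring
    rw [factor]
    exact mul_dvd_mul (pow_dvd_pow _ hit) (pow_dvd_pow _ hjt)
  · exact (card_support_expand_le two_pos _).trans (card_support_X_sub_C_pow_le_Vdig _ t)

end WeightUpperBound

section ConstacyclicCode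

lemma hammingNorm_eq_card_support_ofFn {R : Type*} [Semiring R] [DecidableEq R] {n : ℕ}
    (c : Fin n → R) :
    hammingNorm c = (ofFn n c).support.card := by
  refine Finset.card_bij (fun k _ ↦ k) ?_ (fun _ _ _ _ ↦ Fin.ext) ?_
  · intro k hk
    simpa using hk
  · intro k hk
    have hkn : k < n := by
      by_contra! h
      exact mem_support_iff.mp hk (ofFn_coeff_eq_zero_of_ge c h)
    exact ⟨⟨k, hkn⟩, by simpa [hkn] using hk, rfl⟩

variable {K : Type} [Field K] [DecidableEq K]

lemma mem_codeOfGen_iff_dvd_ofFn {n : ℕ} {lam : K} {g : K[X]} (hg : g ∣ X ^ n - C lam)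
    (c : Fin n → K) : c ∈ codeOfGen n lam g ↔ g ∣ ofFn n c := by
  simp only [codeOfGen, Set.mem_ofPred_eq, Ideal.span_pair_eq_span_left_iff_dvd.mpr hg,
    Ideal.mem_span_singleton, ofFn_eq_sum_monomial, C_mul_X_pow_eq_monomial]

lemma minDistIs_codeOfGen_iff {n : ℕ} {lam : K} {g : K[X]} (hg : g ∣ X ^ n - C lam) (d : ℕ) :
    minDistIs (codeOfGen n lam g) d ↔
      IsLeast {w | ∃ f : K[X], f ≠ 0 ∧ f.natDegree < n ∧ g ∣ f ∧ f.support.card = w} d := by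
  suffices h : {w | ∃ c ∈ codeOfGen n lam g, c ≠ 0 ∧ hammingNorm c = w} =
      {w | ∃ f : K[X], f ≠ 0 ∧ f.natDegree < n ∧ g ∣ f ∧ f.support.card = w} by
    rw [minDistIs, h]
  ext w
  constructor
  · rintro ⟨c, hc, hc0, rfl⟩
    have hf0 : ofFn n c ≠ 0 := (map_ne_zero_iff _ (injective_ofFn n)).mpr hc0
    exact ⟨ofFn n c, hf0, (natDegree_lt_iff_degree_lt hf0).mpr (ofFn_degree_lt c),
      (mem_codeOfGen_iff_dvd_ofFn hg c).mp hc, (hammingNorm_eq_card_support_ofFn c).symm⟩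
  · rintro ⟨f, hf0, hdeg, hdvd, rfl⟩
    have hf : ofFn n (toFn n f) = f := ofFn_comp_toFn_eq_id_of_natDegree_lt hdeg
    refine ⟨toFn n f, (mem_codeOfGen_iff_dvd_ofFn hg _).mpr (by rwa [hf]), ?_, ?_⟩
    · exact fun h ↦ hf0 (by rw [← hf, h, map_zero])
    · rw [hammingNorm_eq_card_support_ofFn, hf]

lemma X_sub_C_pow_mul_X_add_C_pow_dvd {R : Type*} [CommRing R] {p : ℕ} [Fact p.Prime] [CharP R p]
    {s i j : ℕ} (hi : i ≤ p ^ s) (hj : j ≤ p ^ s) (δ : R) :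
    (X - C δ) ^ i * (X + C δ) ^ j ∣ X ^ (2 * p ^ s) - C ((δ ^ 2) ^ p ^ s) := by
  have factor : X ^ (2 * p ^ s) - C ((δ ^ 2) ^ p ^ s) =
      (X - C δ) ^ p ^ s * (X + C δ) ^ p ^ s := by
    rw [← mul_pow, pow_mul, C_pow, ← sub_pow_char_pow, C_pow]
    ring
  rw [factor]
  exact mul_dvd_mul (pow_dvd_pow _ hi) (pow_dvd_pow _ hj)

lemma isLeast_inf'_of_forall_exists_le {ι α : Type*} [LinearOrder α] {W : Set α} {s : Finset ι}
    (hs : s.Nonempty) {φ : ι → α} (lower : ∀ w ∈ W, ∃ t ∈ s, φ t ≤ w)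
    (upper : ∀ t ∈ s, ∃ w ∈ W, w ≤ φ t) : IsLeast W (s.inf' hs φ) := by
  have hlower : s.inf' hs φ ∈ lowerBounds W := fun w hw ↦
    let ⟨_, ht, hle⟩ := lower w hw
    (Finset.inf'_le φ ht).trans hle
  obtain ⟨t, ht, heq⟩ := s.exists_mem_eq_inf' hs φ
  obtain ⟨w, hw, hle⟩ := upper t ht
  exact ⟨(hlower hw).antisymm (hle.trans_eq heq.symm) ▸ hw, hlower⟩

end ConstacyclicCode

theorem stmt8_general {p : ℕ} [hp : Fact p.Prime] (hp2 : p ≠ 2) {K : Type} [Field K]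
    [DecidableEq K] [CharP K p] (s : ℕ) {δ : K} (hδ : δ ≠ 0) {i j : ℕ} (hij : i ≤ j)
    (hi : i < p ^ s) (hj : j ≤ p ^ s) :
    minDistIs (Cij p s i j δ)
      (Finset.inf' (Finset.Icc i (p ^ s - 1)) (Finset.nonempty_Icc.mpr (Nat.le_pred_of_lt hi))
        (fun t => if t < j then 2 * Vdig p t else Vdig p t)) := by
  have hneg : δ ≠ -δ := fun h ↦
    hδ ((Ring.eq_self_iff_eq_zero_of_char_ne_two (ringChar.eq K p ▸ hp2)).mp h.symm)
  have hX : (X + C δ : K[X]) = X - C (-δ) := by rw [C_neg, sub_neg_eq_add]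
  refine (minDistIs_codeOfGen_iff (X_sub_C_pow_mul_X_add_C_pow_dvd hi.le hj δ) _).mpr
    (isLeast_inf'_of_forall_exists_le _ ?_ ?_)
  · rintro _ ⟨f, hf, hdeg, hdvd, rfl⟩
    obtain ⟨t, hit, ht, hle⟩ := exists_le_card_support_of_dvd hδ (neg_ne_zero.mpr hδ) hneg hij hf
      hdeg (hX ▸ hdvd)
    exact ⟨t, Finset.mem_Icc.mpr ⟨hit, Nat.le_pred_of_lt ht⟩, hle⟩
  · intro t ht
    obtain ⟨hit, ht⟩ := Finset.mem_Icc.mp ht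
    replace ht : t < p ^ s := by omega
    split_ifs with htj
    · obtain ⟨f, hf, hdeg, hdvd, hle⟩ := exists_dvd_card_support_le_two_mul_Vdig δ (-δ) hit ht hj
      exact ⟨_, ⟨f, hf, hdeg, hX ▸ hdvd, rfl⟩, hle⟩
    · obtain ⟨f, hf, hdeg, hdvd, hle⟩ :=
        exists_dvd_card_support_le_Vdig (p := p) δ hit (not_lt.mp htj) ht
      exact ⟨_, ⟨f, hf, hdeg, hdvd, rfl⟩, hle⟩

/-- For odd prime `p`, `s ≥ 1` and `0 ≤ i < j ≤ p^s`, the minimum distance of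
`C_{i,j}(2p^s, λ₀)` equals `min ({2V_t : i ≤ t ≤ j−1} ∪ {V_t : j ≤ t ≤ p^s−1})`. -/
theorem stmt8 {p m : ℕ} (hp : p.Prime) (hp2 : p ≠ 2) (hm : 1 ≤ m)
    {F : Type} [Field F] [Fintype F] [DecidableEq F] (hcard : Fintype.card F = p ^ m)
    (s : ℕ) (hs : 1 ≤ s) (δ : F) (hδ : δ ≠ 0)
    (i j : ℕ) (hij : i < j) (hj : j ≤ p ^ s) :
    minDistIs (Cij p s i j δ)
      (Finset.inf' (Finset.Icc i (p ^ s - 1))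
        (Finset.nonempty_Icc.mpr (Nat.le_pred_of_lt (lt_of_lt_of_le hij hj)))
        (fun t => if t < j then 2 * Vdig p t else Vdig p t)) := by
  have : Fact p.Prime := ⟨hp⟩
  have : CharP F p := charP_of_card_eq_prime_pow hcard
  exact stmt8_general hp2 s hδ hij.le (hij.trans_le hj) hj
end

section
/- Let p be a prime, m ≥ 1, s ≥ 2, η a positive integer coprime to p, and λ_0 a nonzero element of F_{p^m} such that x^η − λ_0 is irreducible over F_{p^m}. If for some 0 ≤ i ≤ p^s the code C_i(η, p^s, λ_0) is an optimal LRC, then at least one of the following holds: (a) p = 2, η = 1 and i = 2^{s−1} + 1; (b) p is odd, η = 1 and i = p^{s−1} + 1; (c) i = p^{s−ℓ−1} for some 0 ≤ ℓ ≤ s − 1; (d) p is odd, η = 1 and i = 2; (e) η = 1 and i = p^s − 1. -/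
open Polynomial

variable {F : Type} [Field F] [Fintype F] [DecidableEq F]

/-!
A symbol of locality `r` yields a nonzero dual codeword of weight at most `r + 1`, and up to
reversal the dual of `C_i` consists of the multiples of `(x^η - λ₀)^(p^s - i)`. Such multiples
cannot be sparse: splitting a polynomial according to exponents modulo `p`, either many components
are nonzero or, by applying the operators `X d/dX - b`, each of them vanishes to one order more, and
induction on `s` bounds the number of terms, hence `r`, from below. In the other direction, the
powers `(x^η - λ₀)^(p^s - t p^e)` are codewords with at most `(p + 1 - t) p^(s - e - 1)` terms,
which bounds `d` from above.

Optimality means `d + ⌈k / r⌉ = η i + 2` with `k = η (p^s - i)`. If `i < p^(s-1)` then `d ≤ 2`, so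
`⌈k / r⌉ ≥ η i`, which is compatible with the bound on `r` given by the leading `p`-adic digit of
`i` only if `i` is a power of `p` or `η = 1` and `i = 2`. If `i > p^(s-1)` then
`⌈k / r⌉ ≤ η p^(s-1)`, so `d ≥ η (i - p^(s-1)) + 2`, which exceeds the bound on `d` except at the
two ends `i = p^(s-1) + 1` and `i = p^s - 1` with `η = 1`; for `p = 2`, and for odd `p` near the
upper end, one uses `⌈k / r⌉ ≤ k` instead.
-/

section Polyphase

/-- The `a`-th polyphase component `∑ₖ H_{kp + a} Xᵏ` of a polynomial `H`, so that
`H = ∑_{a < p} Xᵃ Hₐ(Xᵖ)`. It reduces statements about `H` to polynomials of `p`-fold smaller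
degree. -/
noncomputable def polyphase {R : Type*} [CommSemiring R] (p a : ℕ) (H : R[X]) : R[X] :=
  contract p (divX^[a] H)

section CommSemiring

variable {R : Type*} [CommSemiring R] {p : ℕ}

theorem coeff_iterate_divX (H : R[X]) (a k : ℕ) : (divX^[a] H).coeff k = H.coeff (k + a) := by
  induction a generalizing H with
  | zero => simp
  | succ a ih => rw [Function.iterate_succ_apply, ih, coeff_divX, add_assoc]

theorem coeff_polyphase (hp : p ≠ 0) (a : ℕ) (H : R[X]) (k : ℕ) :
    (polyphase p a H).coeff k = H.coeff (k * p + a) := by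
  rw [polyphase, coeff_contract hp, coeff_iterate_divX]

theorem polyphase_add (hp : p ≠ 0) (a : ℕ) (G H : R[X]) :
    polyphase p a (G + H) = polyphase p a G + polyphase p a H := by
  ext k
  simp only [coeff_polyphase hp, coeff_add]

theorem polyphase_expand_mul {a : ℕ} (ha : a < p) (P H : R[X]) :
    polyphase p a (expand R p P * H) = P * polyphase p a H := by
  have hp : p ≠ 0 := by lia
  induction P using Polynomial.induction_on' with
  | add P Q hP hQ => rw [map_add, add_mul, polyphase_add hp, hP, hQ, add_mul]
  | monomial m c =>
    ext k
    rw [expand_monomial]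
    simp only [← C_mul_X_pow_eq_monomial, mul_assoc, coeff_C_mul, coeff_X_pow_mul',
      coeff_polyphase hp]
    by_cases hmk : m ≤ k
    · obtain ⟨t, rfl⟩ := Nat.exists_eq_add_of_le hmk
      have hcoeff : (m + t) * p + a = m * p + (t * p + a) := by ring
      rw [if_pos hmk, hcoeff, if_pos (Nat.le_add_right _ _), Nat.add_sub_cancel_left,
        Nat.add_sub_cancel_left]
    · have hlt : k * p + a < m * p := calc
        k * p + a < (k + 1) * p := by rw [add_one_mul]; lia
        _ ≤ m * p := Nat.mul_le_mul_right p (by lia)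
      rw [if_neg hmk, if_neg hlt.not_ge]

theorem sum_X_pow_mul_expand_polyphase (hp : p ≠ 0) (H : R[X]) :
    ∑ a ∈ Finset.range p, X ^ a * expand R p (polyphase p a H) = H := by
  have hp0 : 0 < p := Nat.pos_of_ne_zero hp
  ext n
  rw [finsetSum_coeff, Finset.sum_eq_single_of_mem (n % p) (Finset.mem_range.2 (n.mod_lt hp0))]
  · rw [coeff_X_pow_mul', if_pos (n.mod_le p), coeff_expand hp0, if_pos (Nat.dvd_sub_mod n),
      coeff_polyphase hp, Nat.div_mul_cancel (Nat.dvd_sub_mod n), Nat.sub_add_cancel (n.mod_le p)]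
  · intro b hb hbn
    rw [coeff_X_pow_mul', coeff_expand hp0]
    split_ifs with hle hdvd
    · have : b ≡ n [MOD p] := (Nat.modEq_iff_dvd' hle).2 hdvd
      exact absurd (Nat.mod_eq_of_lt (Finset.mem_range.1 hb) ▸ this) hbn
    all_goals rfl

theorem exists_polyphase_ne_zero (hp : p ≠ 0) {H : R[X]} (hH : H ≠ 0) :
    ∃ a < p, polyphase p a H ≠ 0 := by
  by_contra! hzero
  refine hH ((sum_X_pow_mul_expand_polyphase hp H).symm.trans (Finset.sum_eq_zero fun a ha ↦ ?_))
  rw [hzero a (Finset.mem_range.1 ha), map_zero, mul_zero]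

theorem degree_polyphase_lt (hp : p ≠ 0) (a : ℕ) {H : R[X]} {N : ℕ}
    (hH : H.degree < (p * N : ℕ)) : (polyphase p a H).degree < N := by
  rw [degree_lt_iff_coeff_zero] at hH ⊢
  intro k hk
  rw [coeff_polyphase hp, hH]
  calc p * N ≤ p * k := Nat.mul_le_mul_left p hk
    _ ≤ k * p + a := by lia

theorem sum_card_support_polyphase_le (hp : p ≠ 0) (H : R[X]) :
    ∑ a ∈ Finset.range p, (polyphase p a H).support.card ≤ H.support.card := by
  rw [Finset.card_eq_sum_card_fiberwise (f := (· % p)) (s := H.support) (t := Finset.range p)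
    fun n _ ↦ by simpa using n.mod_lt (Nat.pos_of_ne_zero hp)]
  refine Finset.sum_le_sum fun a ha ↦ Finset.card_le_card_of_injOn (fun k ↦ k * p + a) ?_ ?_
  · intro k hk
    rw [Finset.mem_coe, mem_support_iff, coeff_polyphase hp] at hk
    simpa [Nat.mod_eq_of_lt (Finset.mem_range.1 ha)] using hk
  · intro k _ l _ hkl
    exact Nat.eq_of_mul_eq_mul_right (Nat.pos_of_ne_zero hp) (Nat.add_right_cancel hkl)

theorem card_support_polyphase_le {a : ℕ} (ha : a < p) (H : R[X]) :
    (polyphase p a H).support.card ≤ H.support.card :=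
  (Finset.single_le_sum (f := fun a ↦ (polyphase p a H).support.card) (fun _ _ ↦ Nat.zero_le _)
    (Finset.mem_range.2 ha)).trans (sum_card_support_polyphase_le (by lia) H)

end CommSemiring

section CommRing

variable {R : Type*} [CommRing R]

theorem pow_dvd_X_mul_derivative_sub {P H : R[X]} {c : ℕ} (hP : P ^ (c + 1) ∣ H) (b : R) :
    P ^ c ∣ X * derivative H - C b * H := by
  have hderiv := pow_sub_one_dvd_derivative_of_pow_dvd hP
  rw [Nat.add_sub_cancel] at hderiv
  exact dvd_sub (hderiv.mul_left X) (((pow_dvd_pow P c.le_succ).trans hP).mul_left (C b))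

variable {p : ℕ} [CharP R p]

theorem polyphase_X_mul_derivative_sub (hp : p ≠ 0) (a b : ℕ) (H : R[X]) :
    polyphase p a (X * derivative H - C (b : R) * H) = C ((a : R) - b) * polyphase p a H := by
  have coeff_X_mul_derivative (n : ℕ) : (X * derivative H).coeff n = n * H.coeff n := by
    cases n with
    | zero => simp
    | succ n => rw [coeff_X_mul, coeff_derivative, mul_comm, Nat.cast_succ]
  ext k
  simp only [coeff_polyphase hp, coeff_sub, coeff_C_mul, coeff_X_mul_derivative]
  push_cast
  rw [CharP.cast_eq_zero R p]
  ring

-- Each application of `X d/dX - b` removes the component `b` at the cost of one factor `X - μ`.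
theorem eval_polyphase_eq_zero [IsDomain R] {μ : R} (hμ : μ ≠ 0) {a : ℕ} (ha : a < p)
    {T : Finset ℕ} (hT : T ⊆ Finset.range p) (haT : a ∉ T) {K : R[X]}
    (hdvd : (X - C μ) ^ (T.card + 1) ∣ K) (hK : ∀ b < p, b ≠ a → b ∉ T → polyphase p b K = 0) :
    (polyphase p a K).eval (μ ^ p) = 0 := by
  have hp : p ≠ 0 := by lia
  induction T using Finset.induction_on generalizing K with
  | empty =>
    have hsum := sum_X_pow_mul_expand_polyphase hp K
    rw [Finset.sum_eq_single_of_mem a (Finset.mem_range.2 ha) fun b hb hba ↦ by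
      rw [hK b (Finset.mem_range.1 hb) hba (Finset.notMem_empty b), map_zero, mul_zero]] at hsum
    have hroot : K.eval μ = 0 := by simpa [dvd_iff_isRoot] using hdvd
    rw [← hsum, eval_mul, eval_pow, eval_X, expand_eval] at hroot
    exact (mul_eq_zero.1 hroot).resolve_left (pow_ne_zero a hμ)
  | insert b T hbT ih =>
    rw [Finset.insert_subset_iff, Finset.mem_range] at hT
    rw [Finset.mem_insert, not_or] at haT
    rw [Finset.card_insert_of_notMem hbT] at hdvd
    have hroot := ih hT.2 haT.2 (pow_dvd_X_mul_derivative_sub hdvd (b : R)) fun c hc hca hcT ↦ by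
      rw [polyphase_X_mul_derivative_sub hp]
      obtain rfl | hcb := eq_or_ne c b
      · rw [sub_self, C_0, zero_mul]
      · rw [hK c hc hca (by simp [hcb, hcT]), mul_zero]
    rw [polyphase_X_mul_derivative_sub hp, eval_mul, eval_C] at hroot
    have hab : (a : R) - b ≠ 0 :=
      sub_ne_zero.2 fun h ↦ haT.1 (CharP.natCast_injOn_Iio R p ha hT.1 h)
    exact (mul_eq_zero.1 hroot).resolve_left hab

end CommRing

end Polyphase

section WeightBound

/-- `w` is a lower bound for the number of terms of the nonzero polynomials of degree less than `N`
that are divisible by `(X - μ)ʲ` for some `μ ≠ 0`. All `μ` are treated at once because passing to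
polyphase components replaces `μ` by `μᵖ`. -/
def WeightBound (K : Type*) [Field K] (N j w : ℕ) : Prop :=
  ∀ ⦃μ : K⦄, μ ≠ 0 → ∀ ⦃H : K[X]⦄, H ≠ 0 → H.degree < N → (X - C μ) ^ j ∣ H → w ≤ H.support.card

theorem expand_X_sub_C_pow {R : Type*} [CommRing R] (η j : ℕ) (μ : R) :
    expand R η ((X - C μ) ^ j) = (X ^ η - C μ) ^ j := by
  rw [map_pow, map_sub, expand_X, expand_C]

theorem X_sub_C_pow_dvd_polyphase {R : Type*} [CommRing R] {η a j : ℕ} {μ : R} {H : R[X]}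
    (ha : a < η) (hH : (X ^ η - C μ) ^ j ∣ H) : (X - C μ) ^ j ∣ polyphase η a H := by
  obtain ⟨Q, rfl⟩ := hH
  rw [← expand_X_sub_C_pow, polyphase_expand_mul ha]
  exact dvd_mul_right _ _

variable {K : Type*} [Field K]

theorem WeightBound.mono {N j j' w w' : ℕ} (h : WeightBound K N j w) (hj : j ≤ j') (hw : w' ≤ w) :
    WeightBound K N j' w' :=
  fun _ hμ _ hH hdeg hdvd ↦ hw.trans (h hμ hH hdeg ((pow_dvd_pow _ hj).trans hdvd))

theorem weightBound_one (N j : ℕ) : WeightBound K N j 1 :=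
  fun _ _ _ hH _ _ ↦ Finset.card_pos.2 (support_nonempty.2 hH)

theorem weightBound_of_le {N j : ℕ} (h : N ≤ j) (w : ℕ) : WeightBound K N j w := by
  intro μ _ H hH hdeg hdvd
  refine absurd (eq_zero_of_dvd_of_degree_lt hdvd ?_) hH
  rw [degree_pow, degree_X_sub_C, nsmul_one]
  exact hdeg.trans_le (mod_cast h)

theorem WeightBound.le_card_support {N j w η : ℕ} (h : WeightBound K N j w) {μ : K} (hμ : μ ≠ 0)
    (hη : η ≠ 0) {H : K[X]} (hH : H ≠ 0) (hdeg : H.degree < (η * N : ℕ))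
    (hdvd : (X ^ η - C μ) ^ j ∣ H) : w ≤ H.support.card := by
  obtain ⟨a, ha, hne⟩ := exists_polyphase_ne_zero hη hH
  exact (h hμ hne (degree_polyphase_lt hη a hdeg) (X_sub_C_pow_dvd_polyphase ha hdvd)).trans
    (card_support_polyphase_le ha H)

variable {p : ℕ} [Fact p.Prime] [CharP K p]

theorem X_sub_C_pow_mul_eq (μ : K) (J : ℕ) : (X - C μ) ^ (p * J) = (X ^ p - C (μ ^ p)) ^ J := by
  rw [pow_mul, sub_pow_char, C_pow]

theorem X_sub_C_pow_succ_dvd_polyphase {μ : K} (hμ : μ ≠ 0) {J c : ℕ} {H : K[X]}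
    (hdvd : (X - C μ) ^ (p * J + c) ∣ H) {S : Finset ℕ} (hSp : S ⊆ Finset.range p)
    (hS : ∀ b < p, b ∉ S → polyphase p b H = 0) (hcard : S.card ≤ c) {a : ℕ} (ha : a < p) :
    (X - C (μ ^ p)) ^ (J + 1) ∣ polyphase p a H := by
  by_cases haS : a ∉ S
  · exact hS a ha haS ▸ dvd_zero _
  rw [not_not] at haS
  obtain ⟨Q, rfl⟩ := hdvd
  have hpoly (b : ℕ) (hb : b < p) : polyphase p b ((X - C μ) ^ (p * J + c) * Q) =
      (X - C (μ ^ p)) ^ J * polyphase p b ((X - C μ) ^ c * Q) := by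
    rw [pow_add, X_sub_C_pow_mul_eq, mul_assoc, ← expand_X_sub_C_pow, polyphase_expand_mul hb]
  have hroot : (polyphase p a ((X - C μ) ^ c * Q)).eval (μ ^ p) = 0 := by
    refine eval_polyphase_eq_zero hμ ha ((S.erase_subset a).trans hSp) (S.notMem_erase a) ?_ ?_
    · rw [Finset.card_erase_add_one haS]
      exact (pow_dvd_pow _ hcard).mul_right Q
    · intro b hb hba hbS
      have hzero := hS b hb fun hb' ↦ hbS (Finset.mem_erase.2 ⟨hba, hb'⟩)
      rw [hpoly b hb] at hzero
      exact (mul_eq_zero.1 hzero).resolve_left (pow_ne_zero J (X_sub_C_ne_zero _))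
  rw [hpoly a ha, pow_succ]
  exact mul_dvd_mul_left _ (dvd_iff_isRoot.2 hroot)

-- If more than `c` components of `H` are nonzero, each contributes `w` terms; otherwise they all
-- vanish at `μᵖ` to one order more, and a single one contributes `w'`.
theorem WeightBound.expand {N J c w w' : ℕ} (h : WeightBound K N J w)
    (h' : WeightBound K N (J + 1) w') :
    WeightBound K (p * N) (p * J + c) (min ((c + 1) * w) w') := by
  intro μ hμ H hH hdeg hdvd
  have hp : p ≠ 0 := (Fact.out : p.Prime).ne_zero
  have hμp : μ ^ p ≠ 0 := pow_ne_zero p hμ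
  classical
  set S : Finset ℕ := {a ∈ Finset.range p | polyphase p a H ≠ 0} with hS
  have hmem (a : ℕ) : a ∈ S ↔ a < p ∧ polyphase p a H ≠ 0 := by
    rw [hS, Finset.mem_filter, Finset.mem_range]
  obtain hfew | hmany := le_or_gt S.card c
  · obtain ⟨a, ha, hne⟩ := exists_polyphase_ne_zero hp hH
    have hdvd' := X_sub_C_pow_succ_dvd_polyphase hμ hdvd (Finset.filter_subset _ _)
      (fun b hb hbS ↦ by simpa [hmem, hb] using hbS) hfew ha
    calc min ((c + 1) * w) w' ≤ w' := min_le_right _ _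
      _ ≤ (polyphase p a H).support.card := h' hμp hne (degree_polyphase_lt hp a hdeg) hdvd'
      _ ≤ H.support.card := card_support_polyphase_le ha H
  · have hdvd' : (X ^ p - C (μ ^ p)) ^ J ∣ H :=
      X_sub_C_pow_mul_eq μ J ▸ (pow_dvd_pow _ (Nat.le_add_right _ c)).trans hdvd
    calc min ((c + 1) * w) w' ≤ (c + 1) * w := min_le_left _ _
      _ ≤ S.card * w := Nat.mul_le_mul_right w hmany
      _ ≤ ∑ a ∈ S, (polyphase p a H).support.card := by
        refine Finset.card_nsmul_le_sum _ _ _ fun a ha ↦ ?_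
        rw [hmem] at ha
        exact h hμp ha.2 (degree_polyphase_lt hp a hdeg) (X_sub_C_pow_dvd_polyphase ha.1 hdvd')
      _ ≤ ∑ a ∈ Finset.range p, (polyphase p a H).support.card :=
        Finset.sum_le_sum_of_subset (Finset.filter_subset _ _)
      _ ≤ H.support.card := sum_card_support_polyphase_le hp H

theorem WeightBound.expand_pow {N J w : ℕ} (h : WeightBound K N J w) (e : ℕ) :
    WeightBound K (p ^ e * N) (p ^ e * J) w := by
  induction e with
  | zero => simpa using h
  | succ e ih =>
    have hstep := ih.expand (p := p) (c := 0) (ih.mono (Nat.le_succ _) le_rfl)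
    simpa [pow_succ', mul_assoc] using hstep

theorem WeightBound.expand_pow_add_one {N J w w' : ℕ} (h : WeightBound K N J w)
    (h' : WeightBound K N (J + 1) w') (hw : w' ≤ 2 * w) (e : ℕ) :
    WeightBound K (p ^ e * N) (p ^ e * J + 1) w' := by
  induction e with
  | zero => simpa using h'
  | succ e ih =>
    have hstep := (h.expand_pow (p := p) e).expand (p := p) (c := 1) ih
    simpa [pow_succ', mul_assoc, hw] using hstep

theorem weightBound_pow_sub_one (l : ℕ) : WeightBound K (p ^ l) (p ^ l - 1) (p ^ l) := by
  have hp : 0 < p := (Fact.out : p.Prime).pos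
  induction l with
  | zero => simpa using weightBound_one 1 0
  | succ l ih =>
    have hpl : 0 < p ^ l := pow_pos hp l
    have hstep := ih.expand (p := p) (c := p - 1) (weightBound_of_le (by lia) (p ^ (l + 1)))
    rw [Nat.sub_add_cancel hp, ← pow_succ', min_self] at hstep
    refine hstep.mono (le_of_eq ?_) le_rfl
    rw [Nat.mul_sub_one, ← pow_succ']
    have := Nat.le_self_pow l.succ_ne_zero p
    lia

theorem weightBound_pow_sub (l : ℕ) {t : ℕ} (ht : t ≤ p) :
    WeightBound K (p ^ (l + 1)) (p ^ (l + 1) - t) ((p + 1 - t) * p ^ l) := by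
  have hpl : 0 < p ^ l := pow_pos (Fact.out : p.Prime).pos l
  have hstep := (weightBound_pow_sub_one (K := K) (p := p) l).expand (p := p) (c := p - t)
    (weightBound_of_le (by lia) ((p + 1 - t) * p ^ l))
  rw [← pow_succ', ← Nat.sub_add_comm ht, min_self, Nat.mul_sub_one, ← pow_succ'] at hstep
  have := Nat.le_self_pow l.succ_ne_zero p
  exact hstep.mono (by lia) le_rfl

theorem weightBound_of_lt_add {l e t j : ℕ} (ht : 1 ≤ t) (htp : t ≤ p)
    (hj : p ^ (l + 1 + e) < j + t * p ^ e) :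
    WeightBound K (p ^ (l + 1 + e)) j ((p + 2 - t) * p ^ l) := by
  have htpl : t ≤ p ^ (l + 1) := htp.trans (Nat.le_self_pow l.succ_ne_zero p)
  have hsucc : WeightBound K (p ^ (l + 1)) (p ^ (l + 1) - t + 1) ((p + 2 - t) * p ^ l) := by
    have hprev := weightBound_pow_sub (K := K) (p := p) l (t := t - 1) (by lia)
    exact hprev.mono (by lia) (Nat.mul_le_mul_right _ (by lia))
  have hbound := (weightBound_pow_sub (K := K) l htp).expand_pow_add_one hsucc
    (by rw [← mul_assoc]; exact Nat.mul_le_mul_right _ (by lia)) e (p := p)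
  rw [← pow_add, add_comm e] at hbound
  refine hbound.mono ?_ le_rfl
  have hle : t * p ^ e ≤ p ^ (l + 1 + e) := pow_add p (l + 1) e ▸ Nat.mul_le_mul_right _ htpl
  rw [Nat.mul_sub, ← pow_add, add_comm e, mul_comm _ t]
  lia

end WeightBound

section PolyCode

theorem hammingNorm_comp_equiv {ι κ M : Type*} [Fintype ι] [Fintype κ] [Zero M] [DecidableEq M]
    (e : ι ≃ κ) (h : κ → M) : hammingNorm (h ∘ e) = hammingNorm h :=
  Finset.card_equiv e fun i ↦ by simp

section OfFn

variable {R : Type*} [Semiring R] [DecidableEq R]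

theorem ofFn_toFn_of_degree_lt {n : ℕ} {H : R[X]} (hH : H.degree < n) : ofFn n (toFn n H) = H := by
  rw [degree_lt_iff_coeff_zero] at hH
  ext k
  obtain hk | hk := lt_or_ge k n
  · simp [hk, toFn]
  · rw [ofFn_coeff_eq_zero_of_ge _ hk, hH k hk]

theorem card_support_ofFn {n : ℕ} (c : Fin n → R) : (ofFn n c).support.card = hammingNorm c := by
  have hsupport : (ofFn n c).support =
      ({i | c i ≠ 0} : Finset (Fin n)).map Fin.valEmbedding := by
    ext k
    obtain hk | hk := lt_or_ge k n
    · simp [Fin.exists_iff, hk]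
    · simp [Fin.exists_iff, hk, hk.not_gt]
  rw [hsupport, Finset.card_map, hammingNorm]

theorem coeff_ofFn_rev_mul (n : ℕ) (h : Fin n → R) (G : R[X]) :
    (ofFn n (h ∘ Fin.rev) * G).coeff (n - 1) = h ⬝ᵥ toFn n G := by
  obtain _ | n := n
  · simp
  rw [coeff_mul, Finset.Nat.sum_antidiagonal_eq_sum_range_succ_mk, Nat.add_sub_cancel,
    ← Finset.sum_range_reflect, Finset.sum_range, dotProduct]
  refine Finset.sum_congr rfl fun k _ ↦ ?_
  have hk : n - (n - (k : ℕ)) = k := by lia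
  simp [hk, Fin.rev, toFn]

end OfFn

-- `V` collects the coefficients of `H * g` from `n` on; `H * g - (X ^ n - C a) * V` is then a
-- multiple of `g` of smaller degree.
theorem dvd_of_coeff_mul_eq_zero {R : Type*} [CommRing R] [IsDomain R] {n : ℕ} {a : R}
    {g Q H : R[X]} (hg : g ≠ 0) (hgQ : X ^ n - C a = g * Q) (hH : H.degree < n)
    (hcoeff : ∀ k < n, g.natDegree ≤ k → (H * g).coeff k = 0) : Q ∣ H := by
  set V : R[X] := divX^[n] (H * g) with hV
  have coeff_V (k : ℕ) (hk : g.natDegree ≤ k) : V.coeff k = 0 := by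
    rw [hV, coeff_iterate_divX]
    refine coeff_eq_zero_of_degree_lt ?_
    rw [degree_mul, degree_eq_natDegree hg]
    calc H.degree + g.natDegree < n + g.natDegree :=
        WithBot.add_lt_add_right (WithBot.natCast_ne_bot _) hH
      _ ≤ (k + n : ℕ) := by norm_cast; lia
  have hdvd : g ∣ H * g - (X ^ n - C a) * V :=
    dvd_sub (dvd_mul_left g H) (hgQ ▸ (dvd_mul_right g Q).mul_right V)
  have hdeg : (H * g - (X ^ n - C a) * V).degree < g.degree := by
    rw [degree_eq_natDegree hg, degree_lt_iff_coeff_zero]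
    intro k hk
    rw [sub_mul, coeff_sub, coeff_sub, coeff_C_mul, coeff_V k hk, coeff_X_pow_mul']
    split_ifs with hnk
    · rw [hV, coeff_iterate_divX, Nat.sub_add_cancel hnk]
      ring
    · rw [hcoeff k (by lia) hk]
      ring
  have hzero := eq_zero_of_dvd_of_degree_lt hdvd hdeg
  refine ⟨V, mul_right_cancel₀ hg ?_⟩
  rw [sub_eq_zero.1 hzero, hgQ]
  ring

/-- The linear code of length `n` with generator polynomial `g`: the vectors whose associated
polynomial is a multiple of `g`. -/
noncomputable def polyCode {K : Type*} [Field K] [DecidableEq K] (n : ℕ) (g : K[X]) :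
    Submodule K (Fin n → K) :=
  ((Ideal.span {g}).restrictScalars K).comap (ofFn n)

section Code

variable {K : Type*} [Field K] [DecidableEq K] {n : ℕ} {g : K[X]}

theorem mem_polyCode {c : Fin n → K} : c ∈ polyCode n g ↔ g ∣ ofFn n c := by
  rw [polyCode, Submodule.mem_comap, Submodule.restrictScalars_mem, Ideal.mem_span_singleton]

theorem toFn_mem_polyCode {H : K[X]} (hdeg : H.degree < n) (hdvd : g ∣ H) :
    toFn n H ∈ polyCode n g := by
  rwa [mem_polyCode, ofFn_toFn_of_degree_lt hdeg]

theorem dvd_ofFn_rev_of_dotProduct_eq_zero {a : K} {Q : K[X]} (hg : g ≠ 0)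
    (hgQ : X ^ n - C a = g * Q) {h : Fin n → K} (horth : ∀ c ∈ polyCode n g, h ⬝ᵥ c = 0) :
    Q ∣ ofFn n (h ∘ Fin.rev) := by
  refine dvd_of_coeff_mul_eq_zero hg hgQ (ofFn_degree_lt _) fun k hkn hgk ↦ ?_
  have hdeg : (g * X ^ (n - 1 - k) : K[X]).degree < n := by
    rw [degree_mul, degree_X_pow, degree_eq_natDegree hg]
    norm_cast
    lia
  have hcoeff := coeff_ofFn_rev_mul n h (g * X ^ (n - 1 - k))
  rw [horth _ (toFn_mem_polyCode hdeg (dvd_mul_right _ _)), ← mul_assoc] at hcoeff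
  rwa [← coeff_mul_X_pow _ (n - 1 - k), Nat.add_sub_cancel' (by lia)]

theorem natCard_polyCode (hg : g ≠ 0) (hgn : g.natDegree ≤ n) :
    Nat.card (polyCode n g) = Nat.card K ^ (n - g.natDegree) := by
  have degree_mul_lt {k : ℕ} {A : K[X]} :
      (g * A).degree < (g.natDegree + k : ℕ) ↔ A.degree < k := by
    rw [degree_mul, degree_eq_natDegree hg, Nat.cast_add,
      WithBot.add_lt_add_iff_left (WithBot.natCast_ne_bot _)]
  obtain ⟨k, rfl⟩ := Nat.exists_eq_add_of_le hgn
  let encode (a : Fin k → K) : Fin (g.natDegree + k) → K := toFn _ (g * ofFn k a)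
  have ofFn_encode (a : Fin k → K) : ofFn _ (encode a) = g * ofFn k a :=
    ofFn_toFn_of_degree_lt (degree_mul_lt.2 (ofFn_degree_lt a))
  have encode_injective : Function.Injective encode := fun a b hab ↦
    injective_ofFn k (mul_left_cancel₀ hg (by rw [← ofFn_encode, hab, ofFn_encode]))
  have range_encode : Set.range encode = (polyCode (g.natDegree + k) g : Set _) := by
    ext c
    rw [SetLike.mem_coe, mem_polyCode]
    constructor
    · rintro ⟨a, rfl⟩
      exact ofFn_encode a ▸ dvd_mul_right _ _
    · rintro ⟨A, hA⟩
      have hAdeg : A.degree < k := degree_mul_lt.1 (hA ▸ ofFn_degree_lt c)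
      refine ⟨toFn k A, injective_ofFn _ ?_⟩
      rw [ofFn_encode, ofFn_toFn_of_degree_lt hAdeg, hA]
  have hcard := Nat.card_range_of_injective encode_injective
  rw [range_encode] at hcard
  exact hcard.trans (by rw [Nat.card_fun, Nat.card_fin, Nat.add_sub_cancel_left])

end Code

section Locality

variable {E : Type} [Field E] {n : ℕ}

theorem coe_polyCode_eq_codeOfGen [DecidableEq E] {g : E[X]} {a : E} (hg : g ∣ X ^ n - C a) :
    (polyCode n g : Set (Fin n → E)) = codeOfGen n a g := by
  ext c
  have hsum : ∑ j : Fin n, C (c j) * X ^ (j : ℕ) = ofFn n c := by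
    simp only [ofFn_eq_sum_monomial, C_mul_X_pow_eq_monomial]
  have hspan : Ideal.span {g, X ^ n - C a} = Ideal.span {g} := by
    rw [Ideal.span_insert, sup_eq_left]
    exact Ideal.span_singleton_le_span_singleton.2 hg
  rw [SetLike.mem_coe, mem_polyCode, codeOfGen, Set.mem_ofPred_eq, hsum, hspan,
    Ideal.mem_span_singleton]

theorem exists_dotProduct_eq_zero_of_symbolLocality [DecidableEq E]
    {D : Submodule E (Fin n → E)} {i : Fin n} {r : ℕ}
    (hloc : symbolLocality (D : Set (Fin n → E)) i r) :
    ∃ h : Fin n → E, h ≠ 0 ∧ hammingNorm h ≤ r + 1 ∧ ∀ c ∈ D, h ⬝ᵥ c = 0 := by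
  obtain ⟨I, hiI, hIr, f, hf⟩ := hloc
  let symbol (k : Fin n) : D →ₗ[E] E := (LinearMap.proj k).comp D.subtype
  have hspan : symbol i ∈ Submodule.span E (symbol '' I) := by
    rw [Set.image_eq_range]
    refine mem_span_of_iInf_ker_le_ker fun c hc ↦ ?_
    have hcI : (fun j : {x // x ∈ I} ↦ c.1 j.1) = fun j ↦ (0 : Fin n → E) j.1 :=
      _root_.funext ((Submodule.mem_iInf _).1 hc)
    exact (hf c.1 c.2).trans (hcI ▸ (hf 0 D.zero_mem).symm)
  obtain ⟨b, hb⟩ := (Submodule.mem_span_image_finset_iff_exists_fun' E).1 hspan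
  refine ⟨(fun k ↦ if k ∈ I then b k else 0) - Pi.single i 1, ?_, ?_, ?_⟩
  · exact fun h0 ↦ by simpa [hiI] using congrFun h0 i
  · calc _ ≤ (insert i I).card := Finset.card_le_card fun k hk ↦ by
          contrapose! hk
          simp_all [Pi.single_apply]
      _ ≤ r + 1 := (Finset.card_insert_le _ _).trans (by lia)
  · intro c hc
    have hsum : ∑ k ∈ I, b k * c k = c i := by simpa [symbol] using LinearMap.congr_fun hb ⟨c, hc⟩
    rw [sub_dotProduct, single_one_dotProduct, ← hsum, sub_eq_zero]
    simp [dotProduct]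

theorem exists_dvd_card_support_le_of_locality (hn : n ≠ 0) {a : E} {g Q : E[X]} (hg : g ≠ 0)
    (hgQ : X ^ n - C a = g * Q) {r : ℕ} (hloc : hasAllSymbolLocality (codeOfGen n a g) r) :
    ∃ H : E[X], H ≠ 0 ∧ H.degree < n ∧ Q ∣ H ∧ H.support.card ≤ r + 1 := by
  classical
  rw [← coe_polyCode_eq_codeOfGen (Dvd.intro Q hgQ.symm)] at hloc
  obtain ⟨h, hh, hwt, horth⟩ :=
    exists_dotProduct_eq_zero_of_symbolLocality (hloc ⟨0, Nat.pos_of_ne_zero hn⟩)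
  refine ⟨ofFn n (h ∘ Fin.rev), fun h0 ↦ hh ?_, ofFn_degree_lt _,
    dvd_ofFn_rev_of_dotProduct_eq_zero hg hgQ horth, ?_⟩
  · have hcomp : h ∘ Fin.rev = 0 := injective_ofFn n (h0.trans (ofFn_zero n).symm)
    exact Fin.rev_surjective.injective_comp_right hcomp
  · rw [card_support_ofFn]
    exact (hammingNorm_comp_equiv Fin.revPerm h).trans_le hwt

end Locality

end PolyCode

section MinimumDistance

theorem card_support_X_pow_sub_C_pow_le {R : Type*} [CommRing R] (n : ℕ) (a : R) (N : ℕ) :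
    ((X ^ n - C a) ^ N).support.card ≤ N + 1 := by
  have hpow : (X ^ n - C a) ^ N =
      ∑ m ∈ Finset.range (N + 1), C ((-a) ^ (N - m) * N.choose m) * X ^ (n * m) := by
    rw [sub_eq_add_neg, add_pow]
    refine Finset.sum_congr rfl fun m _ ↦ ?_
    simp only [C_mul, C_pow, C_neg, map_natCast, pow_mul]
    ring
  calc ((X ^ n - C a) ^ N).support.card
      ≤ ((Finset.range (N + 1)).image (n * ·)).card := Finset.card_le_card fun k hk ↦ by
        rw [hpow, mem_support_iff, finsetSum_coeff] at hk
        obtain ⟨m, hm, hne⟩ := Finset.exists_ne_zero_of_sum_ne_zero hk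
        rw [coeff_C_mul_X_pow] at hne
        exact Finset.mem_image.2 ⟨m, hm, (ite_ne_right_iff.1 hne).1.symm⟩
    _ ≤ N + 1 := Finset.card_image_le.trans (Finset.card_range _).le

section CharP

variable {R : Type*} [CommRing R] {p : ℕ} [Fact p.Prime] [CharP R p]

theorem X_pow_mul_sub_C_pow_eq (η s : ℕ) (a : R) :
    X ^ (η * p ^ s) - C (a ^ p ^ s) = (X ^ η - C a) ^ p ^ s := by
  rw [sub_pow_char_pow, ← pow_mul, C_pow]

theorem card_support_X_pow_sub_C_pow_sub_le (η : ℕ) (a : R) (l e : ℕ) {t : ℕ} (ht : t ≤ p) :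
    ((X ^ η - C a) ^ (p ^ (l + 1 + e) - t * p ^ e)).support.card ≤ (p + 1 - t) * p ^ l := by
  have hpl : 0 < p ^ l := pow_pos (Fact.out : p.Prime).pos l
  have hexp : p ^ (l + 1 + e) - t * p ^ e = p ^ (e + 1) * (p ^ l - 1) + p ^ e * (p - t) := by
    zify [ht, hpl, Nat.mul_le_mul_right (p ^ e) (ht.trans (Nat.le_self_pow l.succ_ne_zero p)),
      pow_add p (l + 1) e]
    ring
  rw [hexp, pow_add, pow_mul, pow_mul, ← X_pow_mul_sub_C_pow_eq, ← X_pow_mul_sub_C_pow_eq]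
  calc _ ≤ (p ^ l - 1 + 1) * (p - t + 1) := card_support_mul_le.trans
        (Nat.mul_le_mul (card_support_X_pow_sub_C_pow_le ..) (card_support_X_pow_sub_C_pow_le ..))
    _ = (p + 1 - t) * p ^ l := by
      rw [Nat.sub_add_cancel hpl, mul_comm, ← Nat.sub_add_comm ht]

end CharP

theorem minDistIs.le_card_support {E : Type} [Field E] [DecidableEq E] {n d : ℕ} {g H : E[X]}
    (hd : minDistIs (polyCode n g : Set (Fin n → E)) d) (hH : H ≠ 0) (hdeg : H.degree < n)
    (hdvd : g ∣ H) : d ≤ H.support.card := by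
  refine hd.2 ⟨toFn n H, toFn_mem_polyCode hdeg hdvd, fun h0 ↦ hH ?_, ?_⟩
  · rw [← ofFn_toFn_of_degree_lt hdeg, h0, map_zero]
  · rw [← card_support_ofFn, ofFn_toFn_of_degree_lt hdeg]

end MinimumDistance

section RepeatedRoot

variable {E : Type} [Field E] {p : ℕ} [Fact p.Prime] [CharP E p] {η s i d r : ℕ} {a : E}

theorem X_pow_mul_sub_C_pow_eq_mul (hi : i ≤ p ^ s) :
    X ^ (η * p ^ s) - C (a ^ p ^ s) = (X ^ η - C a) ^ i * (X ^ η - C a) ^ (p ^ s - i) := by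
  rw [X_pow_mul_sub_C_pow_eq, ← pow_add, Nat.add_sub_cancel' hi]

theorem coe_polyCode_eq_Ci [DecidableEq E] (hi : i ≤ p ^ s) :
    (polyCode (η * p ^ s) ((X ^ η - C a) ^ i) : Set (Fin (η * p ^ s) → E)) = Ci p η s i a :=
  coe_polyCode_eq_codeOfGen (Dvd.intro _ (X_pow_mul_sub_C_pow_eq_mul hi).symm)

theorem natCard_Ci (hη : η ≠ 0) (hi : i ≤ p ^ s) :
    Nat.card (Ci p η s i a) = Nat.card E ^ (η * (p ^ s - i)) := by
  classical
  have hdeg : ((X ^ η - C a) ^ i).natDegree = η * i := by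
    rw [natDegree_pow, natDegree_X_pow_sub_C, mul_comm]
  have hcard := natCard_polyCode (pow_ne_zero i (X_pow_sub_C_ne_zero (Nat.pos_of_ne_zero hη) a))
    (hdeg.trans_le (Nat.mul_le_mul_left η hi))
  rw [hdeg, ← Nat.mul_sub] at hcard
  rw [← coe_polyCode_eq_Ci hi]
  exact hcard

theorem lt_pow_of_minDistIs_Ci [DecidableEq E] (hη : η ≠ 0) (hi : i ≤ p ^ s)
    (hd : minDistIs (Ci p η s i a) d) : i < p ^ s := by
  refine hi.lt_of_ne fun h ↦ ?_
  obtain ⟨c, hc, hc0, -⟩ := hd.1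
  rw [← coe_polyCode_eq_Ci hi, SetLike.mem_coe, mem_polyCode] at hc
  refine hc0 (injective_ofFn _ ((eq_zero_of_dvd_of_degree_lt hc ?_).trans (map_zero _).symm))
  rw [degree_pow, degree_X_pow_sub_C (Nat.pos_of_ne_zero hη), nsmul_eq_mul, h]
  exact (ofFn_degree_lt c).trans_eq (by rw [mul_comm, Nat.cast_mul])

theorem minDist_Ci_le [DecidableEq E] (hη : η ≠ 0) (hd : minDistIs (Ci p η s i a) d) {l e t : ℕ}
    (hs : s = l + 1 + e) (ht : 1 ≤ t) (htp : t ≤ p) (hit : i + t * p ^ e ≤ p ^ s) :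
    d ≤ (p + 1 - t) * p ^ l := by
  subst hs
  have hη0 : 0 < η := Nat.pos_of_ne_zero hη
  have hpe : 0 < t * p ^ e := Nat.mul_pos ht (pow_pos (Fact.out : p.Prime).pos e)
  rw [← coe_polyCode_eq_Ci (by lia)] at hd
  refine (hd.le_card_support (pow_ne_zero _ (X_pow_sub_C_ne_zero hη0 a)) ?_
    (pow_dvd_pow _ (by lia))).trans (card_support_X_pow_sub_C_pow_sub_le η a l e htp)
  rw [degree_pow, degree_X_pow_sub_C hη0, nsmul_eq_mul, mul_comm]
  exact_mod_cast Nat.mul_lt_mul_of_pos_left (by lia) hη0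

theorem WeightBound.le_locality_Ci_add_one {w : ℕ} (hw : WeightBound E (p ^ s) (p ^ s - i) w)
    (hη : η ≠ 0) (ha : a ≠ 0) (hi : i ≤ p ^ s) (hr : hasAllSymbolLocality (Ci p η s i a) r) :
    w ≤ r + 1 := by
  have hn : η * p ^ s ≠ 0 := mul_ne_zero hη (pow_ne_zero s (Fact.out : p.Prime).ne_zero)
  obtain ⟨H, hH, hdeg, hdvd, hcard⟩ := exists_dvd_card_support_le_of_locality hn
    (pow_ne_zero i (X_pow_sub_C_ne_zero (Nat.pos_of_ne_zero hη) a)) (X_pow_mul_sub_C_pow_eq_mul hi)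
    hr
  exact (hw.le_card_support ha hη hH hdeg hdvd).trans hcard

theorem ne_zero_of_locality_Ci (hη : η ≠ 0) (ha : a ≠ 0)
    (hr : hasAllSymbolLocality (Ci p η s i a) r) : i ≠ 0 := by
  rintro rfl
  have hw : WeightBound E (p ^ s) (p ^ s - 0) (r + 2) := weightBound_of_le le_rfl _
  have := hw.le_locality_Ci_add_one hη ha (Nat.zero_le _) hr
  lia

theorem le_locality_Ci_add_one (hη : η ≠ 0) (ha : a ≠ 0) (hi : i ≤ p ^ s)
    (hr : hasAllSymbolLocality (Ci p η s i a) r) {l e t : ℕ} (hs : s = l + 1 + e) (ht : 1 ≤ t)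
    (htp : t ≤ p) (hit : i < t * p ^ e) : (p + 2 - t) * p ^ l ≤ r + 1 := by
  subst hs
  have hw : WeightBound E (p ^ (l + 1 + e)) (p ^ (l + 1 + e) - i) ((p + 2 - t) * p ^ l) :=
    weightBound_of_lt_add ht htp (by lia)
  exact hw.le_locality_Ci_add_one hη ha hi hr

theorem one_le_locality_Ci (hη : η ≠ 0) (ha : a ≠ 0) (hi : i < p ^ (s + 1))
    (hr : hasAllSymbolLocality (Ci p η (s + 1) i a) r) : 1 ≤ r := by
  have := le_locality_Ci_add_one hη ha hi.le hr (l := 0) (e := s) (t := p) (by lia)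
    (Fact.out : p.Prime).one_le le_rfl (pow_succ' p s ▸ hi)
  lia

theorem exists_params_of_optimalLRC_Ci [Fintype E] [DecidableEq E] (hη : η ≠ 0) (hi : i ≤ p ^ s)
    (hopt : optimalLRC (Ci p η s i a)) :
    ∃ d r, minDistIs (Ci p η s i a) d ∧ hasAllSymbolLocality (Ci p η s i a) r ∧
      d + nceil (η * (p ^ s - i)) r = η * i + 2 := by
  obtain ⟨k, d, r, hcard, hd, hr, hsingleton⟩ := hopt
  rw [natCard_Ci hη hi, Nat.card_eq_fintype_card] at hcard
  obtain rfl : η * (p ^ s - i) = k := Nat.pow_right_injective Fintype.one_lt_card hcard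
  refine ⟨d, r, hd, hr.1, ?_⟩
  have hlen : η * (p ^ s - i) + η * i = η * p ^ s := by rw [← mul_add, Nat.sub_add_cancel hi]
  lia

end RepeatedRoot

section Arithmetic

theorem nceil_le_of_le_mul {k r m : ℕ} (h : k ≤ m * r) : nceil k r ≤ m := by
  obtain rfl | hr := Nat.eq_zero_or_pos r
  · simp [nceil]
  · exact Nat.lt_succ_iff.1 ((Nat.div_lt_iff_lt_mul hr).2 (by rw [Nat.succ_mul]; lia))

theorem exists_mul_pow_le_lt {p i : ℕ} (hp : 1 < p) (hi : i ≠ 0) :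
    ∃ e u, 1 ≤ u ∧ u < p ∧ u * p ^ e ≤ i ∧ i < (u + 1) * p ^ e := by
  have hpos : 0 < p ^ Nat.log p i := pow_pos (by lia) _
  refine ⟨Nat.log p i, i / p ^ Nat.log p i, ?_, ?_, Nat.div_mul_le_self _ _, ?_⟩
  · exact (Nat.one_le_div_iff hpos).2 (Nat.pow_log_le_self p hi)
  · rw [Nat.div_lt_iff_lt_mul hpos, ← pow_succ']
    exact Nat.lt_pow_succ_log_self hp i
  · rw [mul_comm]
    exact Nat.lt_mul_div_succ i hpos

theorem mul_lt_of_mul_sub_one_mul_lt {η i r M L w : ℕ}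
    (hlt : (η * i - 1) * r < η * (M * L - i)) (hw : w * L ≤ r + 1) :
    (η * i - 1) * w < η * M := by
  have hiML : i ≤ M * L := by
    by_contra! h
    simp [Nat.sub_eq_zero_of_le h.le] at hlt
  refine Nat.lt_of_mul_lt_mul_right (a := L) ?_
  calc (η * i - 1) * w * L ≤ (η * i - 1) * (r + 1) :=
        mul_assoc _ w L ▸ Nat.mul_le_mul_left _ hw
    _ < η * (M * L - i) + η * i := by rw [mul_add_one]; lia
    _ = η * M * L := by rw [← mul_add, Nat.sub_add_cancel hiML, mul_assoc]

theorem eq_or_eq_two_of_mul_lt {p u η P i : ℕ} (hη : η ≠ 0) (hP : P ≠ 0) (hu : 1 ≤ u)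
    (hup : u < p) (hui : u * P ≤ i) (hlt : (η * i - 1) * (p + 1 - u) < η * (p * P)) :
    i = P ∨ p ≠ 2 ∧ η = 1 ∧ i = 2 := by
  obtain ⟨b, rfl⟩ := Nat.exists_eq_add_of_le' hu
  obtain ⟨v, rfl⟩ : ∃ v, p = b + 1 + v := Nat.exists_eq_add_of_le hup.le
  have hv : 0 < v := by lia
  have hmain : η * i * (v + 1) < η * ((b + 1 + v) * P) + (v + 1) := by
    rw [show b + 1 + v + 1 - (b + 1) = v + 1 by lia, Nat.sub_one_mul] at hlt
    lia
  obtain rfl | hb := Nat.eq_zero_or_pos b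
  · left
    have hle : η * i < η * P + 1 := Nat.lt_of_mul_lt_mul_right (a := v + 1) (by linarith)
    have := Nat.le_of_mul_le_mul_left (Nat.lt_succ_iff.1 hle) (Nat.pos_of_ne_zero hη)
    lia
  · right
    have hexcess : η * P * b * v < v + 1 := by
      have := Nat.mul_le_mul_right (v + 1) (Nat.mul_le_mul_left η hui)
      linarith
    have hle : η * P * b ≤ 1 := Nat.le_of_mul_le_mul_right (c := v) (by lia) hv
    have hone : η * P * b = 1 := by
      have : 0 < η * P * b := by positivity
      lia
    obtain ⟨⟨rfl, rfl⟩, rfl⟩ : (η = 1 ∧ P = 1) ∧ b = 1 := by simpa [mul_eq_one] using hone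
    have hi3 : i < 3 := Nat.lt_of_mul_lt_mul_right (a := v + 1) (by linarith)
    exact ⟨by lia, rfl, by lia⟩

theorem eq_one_and_eq_one_or_of_mul_add_two_le {η Y N j : ℕ} (hη : η ≠ 0) (hN : 4 ≤ N)
    (hj0 : j ≠ 0) (hj : j < 2 * Y) (hle : η * (N * Y) + 2 ≤ N + 2 * (η * j)) :
    η = 1 ∧ (j = 1 ∨ N = 4 ∧ j + 1 = 2 * Y) := by
  obtain ⟨M, rfl⟩ := Nat.exists_eq_add_of_le' hN
  obtain ⟨D, hD⟩ : ∃ D, (M + 4) * Y = 2 * j + D := ⟨M * Y + (4 * Y - 2 * j), by rw [add_mul]; lia⟩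
  have hηD : η * D ≤ M + 2 := by
    rw [hD] at hle
    linarith
  have hDle : D ≤ η * D := Nat.le_mul_of_pos_left D (Nat.pos_of_ne_zero hη)
  have hMY : M * Y ≤ M := by linarith
  have hMle : M ≤ M * Y := Nat.le_mul_of_pos_right M (by lia)
  have hη1 : η = 1 := by
    refine le_antisymm (Nat.le_of_mul_le_mul_right (c := D) ?_ ?_) (Nat.pos_of_ne_zero hη) <;> lia
  refine ⟨hη1, ?_⟩
  obtain rfl | hM := Nat.eq_zero_or_pos M
  · right
    lia
  · left
    have := Nat.le_of_mul_le_mul_left (hMY.trans (mul_one M).ge) hM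
    exact le_antisymm (by lia) (Nat.pos_of_ne_zero hj0)

theorem eq_one_and_eq_one_of_mul_add_two_le {p η B m : ℕ} (hη : η ≠ 0) (hp : 3 ≤ p)
    (hB : p ≤ B) (hm : m ≠ 0) (hmp : m < p)
    (hle : η * (p * B) + 2 ≤ (p + 1 - m) * B + 2 * (η * m)) : η = 1 ∧ m = 1 := by
  obtain ⟨m, rfl⟩ := Nat.exists_eq_add_one_of_ne_zero hm
  obtain ⟨D, hD⟩ : ∃ D, p * B = 2 * (m + 1) + D := Nat.exists_eq_add_of_le (by nlinarith)
  have hηD : η * D + 2 + m * B ≤ p * B := by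
    have hsplit : (p + 1 - (m + 1)) * B + m * B = p * B := by
      rw [← add_mul, show p + 1 - (m + 1) + m = p by lia]
    have : η * (p * B) = 2 * (η * (m + 1)) + η * D := by rw [hD]; ring
    lia
  have hDle : D ≤ η * D := Nat.le_mul_of_pos_left D (Nat.pos_of_ne_zero hη)
  obtain rfl : m = 0 := by
    by_contra hm0
    have : m * 3 ≤ m * B := Nat.mul_le_mul_left m (hp.trans hB)
    lia
  have hD0 : 0 < D := by nlinarith
  have : η ≤ 1 := Nat.le_of_mul_le_mul_right (c := D) (by lia) hD0
  exact ⟨by lia, rfl⟩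

end Arithmetic

section Classification

variable {E : Type} [Field E] {p : ℕ} [Fact p.Prime] [CharP E p] {η s i d r : ℕ} {a : E}

theorem nceil_le_mul_sub_of_locality_Ci (hη : η ≠ 0) (ha : a ≠ 0) (hi : i < p ^ (s + 1))
    (hr : hasAllSymbolLocality (Ci p η (s + 1) i a) r) :
    nceil (η * (p ^ (s + 1) - i)) r ≤ η * (p ^ (s + 1) - i) :=
  nceil_le_of_le_mul (Nat.le_mul_of_pos_right _ (one_le_locality_Ci hη ha hi hr))

theorem nceil_le_mul_pow_of_locality_Ci (hη : η ≠ 0) (ha : a ≠ 0) (hi : i < p ^ (s + 1))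
    (hr : hasAllSymbolLocality (Ci p η (s + 1) i a) r) :
    nceil (η * (p ^ (s + 1) - i)) r ≤ η * p ^ s := by
  have hpos : 0 < p ^ s := pow_pos (Fact.out : p.Prime).pos s
  have hup : i / p ^ s < p := (Nat.div_lt_iff_lt_mul hpos).2 (pow_succ' p s ▸ hi)
  have hloc := le_locality_Ci_add_one hη ha hi.le hr (l := 0) (e := s) (t := i / p ^ s + 1)
    (by lia) (by lia) hup (mul_comm (p ^ s) _ ▸ Nat.lt_mul_div_succ i hpos)
  refine nceil_le_of_le_mul ?_
  rw [mul_assoc]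
  refine Nat.mul_le_mul_left η ?_
  calc p ^ (s + 1) - i ≤ p ^ s * p - p ^ s * (i / p ^ s) := by
        rw [pow_succ]
        exact Nat.sub_le_sub_left (Nat.mul_div_le i _) _
    _ = p ^ s * (p - i / p ^ s) := (Nat.mul_sub ..).symm
    _ ≤ p ^ s * r := Nat.mul_le_mul_left _ (by lia)

variable [DecidableEq E]

theorem eq_pow_or_eq_two_of_lt_pow (hη : η ≠ 0) (ha : a ≠ 0) (hi : i < p ^ s)
    (hd : minDistIs (Ci p η (s + 1) i a) d) (hr : hasAllSymbolLocality (Ci p η (s + 1) i a) r)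
    (hsingleton : d + nceil (η * (p ^ (s + 1) - i)) r = η * i + 2) :
    (∃ ℓ ≤ s, i = p ^ (s - ℓ)) ∨ p ≠ 2 ∧ η = 1 ∧ i = 2 := by
  have hp : p.Prime := Fact.out
  have hi' : i < p ^ (s + 1) := hi.trans (Nat.pow_lt_pow_right hp.one_lt s.lt_succ_self)
  obtain ⟨e, u, hu, hup, hui, hiu⟩ :=
    exists_mul_pow_le_lt hp.one_lt (ne_zero_of_locality_Ci hη ha hr)
  have hes : e < s := by
    rw [← Nat.pow_lt_pow_iff_right hp.one_lt]
    exact (Nat.le_mul_of_pos_left _ hu).trans_lt (hui.trans_lt hi)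
  obtain ⟨l, rfl⟩ := Nat.exists_eq_add_of_le' hes.le
  have hd2 : d ≤ 2 := by
    have := minDist_Ci_le hη hd (l := 0) (e := l + e) (t := p - 1) (by lia)
      (Nat.le_sub_one_of_lt hp.one_lt) (Nat.sub_le p 1)
      (by rw [Nat.sub_one_mul, pow_succ']; have := Nat.le_mul_of_pos_left (p ^ (l + e)) hp.pos; lia)
    lia
  have hloc : (p + 1 - u) * p ^ l ≤ r + 1 := by
    have := le_locality_Ci_add_one hη ha hi'.le hr (l := l) (e := e) (t := u + 1) (by lia)
      (by lia) hup hiu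
    rwa [show p + 2 - (u + 1) = p + 1 - u by lia] at this
  have hlt : (η * i - 1) * r < η * (p * p ^ e * p ^ l - i) := by
    have hpow : p * p ^ e * p ^ l = p ^ (l + e + 1) := by ring
    rw [hpow]
    by_contra! hge
    have := nceil_le_of_le_mul hge
    have : 0 < η * i := Nat.mul_pos (Nat.pos_of_ne_zero hη)
      (Nat.pos_of_ne_zero (ne_zero_of_locality_Ci hη ha hr))
    lia
  exact (eq_or_eq_two_of_mul_lt hη (pow_ne_zero e hp.ne_zero) hu hup hui
    (mul_lt_of_mul_sub_one_mul_lt hlt hloc)).imp_left fun h ↦ ⟨l, by lia, by simpa using h⟩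

theorem eq_pow_add_one_or_eq_pow_sub_one_of_two_pow_lt [CharP E 2] (hη : η ≠ 0) (ha : a ≠ 0)
    (hlt : 2 ^ s < i) (hi : i < 2 ^ (s + 1)) (hd : minDistIs (Ci 2 η (s + 1) i a) d)
    (hr : hasAllSymbolLocality (Ci 2 η (s + 1) i a) r)
    (hsingleton : d + nceil (η * (2 ^ (s + 1) - i)) r = η * i + 2) :
    η = 1 ∧ (i = 2 ^ s + 1 ∨ i = 2 ^ (s + 1) - 1) := by
  obtain ⟨j, hj⟩ := Nat.exists_eq_add_of_le hi.le
  have hjs : j < 2 ^ s := by lia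
  have hj0 : j ≠ 0 := by lia
  have hYj : 2 ^ Nat.log 2 j ≤ j := Nat.pow_log_le_self 2 hj0
  have hjY : j < 2 * 2 ^ Nat.log 2 j := pow_succ' 2 _ ▸ Nat.lt_pow_succ_log_self one_lt_two j
  obtain ⟨l, hl⟩ := Nat.exists_eq_add_of_lt
    ((Nat.pow_lt_pow_iff_right one_lt_two).1 (hYj.trans_lt hjs))
  set e := Nat.log 2 j
  have hN : 4 * 2 ^ l * 2 ^ e = 2 ^ (s + 1) := by rw [hl]; ring
  have hd' : d ≤ 4 * 2 ^ l := by
    have := minDist_Ci_le hη hd (l := l + 1) (e := e) (t := 1) (by lia) le_rfl one_le_two (by lia)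
    rw [pow_succ] at this
    lia
  have hceil := nceil_le_mul_sub_of_locality_Ci hη ha hi hr
  rw [hj, Nat.add_sub_cancel_left] at hceil hsingleton
  have hle : η * (4 * 2 ^ l * 2 ^ e) + 2 ≤ 4 * 2 ^ l + 2 * (η * j) := by
    rw [hN, hj, mul_add]
    lia
  obtain ⟨hη1, h⟩ := eq_one_and_eq_one_or_of_mul_add_two_le hη
    (Nat.le_mul_of_pos_right 4 (Nat.two_pow_pos l)) hj0 hjY hle
  refine ⟨hη1, h.symm.imp (fun ⟨h4, hjY⟩ ↦ ?_) fun h1 ↦ by lia⟩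
  have : 2 * 2 ^ s = 2 ^ (s + 1) := (pow_succ' 2 s).symm
  rw [h4] at hN
  lia

theorem eq_pow_add_one_or_eq_pow_sub_one_of_pow_lt (hη : η ≠ 0) (ha : a ≠ 0) (hp : 3 ≤ p)
    (hs : s ≠ 0) (hlt : p ^ s < i) (hi : i < p ^ (s + 1)) (hd : minDistIs (Ci p η (s + 1) i a) d)
    (hr : hasAllSymbolLocality (Ci p η (s + 1) i a) r)
    (hsingleton : d + nceil (η * (p ^ (s + 1) - i)) r = η * i + 2) :
    η = 1 ∧ (i = p ^ s + 1 ∨ i = p ^ (s + 1) - 1) := by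
  have hpB : p ≤ p ^ s := Nat.le_self_pow hs p
  have hB : p ^ (s + 1) = p * p ^ s := pow_succ' p s
  obtain ⟨k, rfl⟩ := Nat.exists_eq_add_of_le hlt.le
  have hkd : η * k + 2 ≤ d := by
    have := nceil_le_mul_pow_of_locality_Ci hη ha hi hr
    rw [mul_add] at hsingleton
    lia
  have hkη : k ≤ η * k := Nat.le_mul_of_pos_left k (Nat.pos_of_ne_zero hη)
  obtain hk | hk := le_or_gt k (p ^ s)
  · have hd3 : d ≤ 3 := by
      have hpred : 2 * p ^ s + (p - 2) * p ^ s = p * p ^ s := by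
        rw [← add_mul, Nat.add_sub_cancel' (by lia)]
      have := minDist_Ci_le hη hd (l := 0) (e := s) (t := p - 2) (by lia) (by lia) (by lia) (by lia)
      rw [pow_zero, mul_one] at this
      lia
    obtain ⟨rfl, rfl⟩ : η = 1 ∧ k = 1 := mul_eq_one.1 (by lia)
    exact ⟨rfl, Or.inl rfl⟩
  obtain hfar | hnear := le_or_gt (p ^ s + k + p) (p ^ (s + 1))
  · have := minDist_Ci_le hη hd (l := s) (e := 0) (t := p) rfl (by lia) le_rfl (by simpa using hfar)
    rw [Nat.add_sub_cancel_left, one_mul] at this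
    lia
  · obtain ⟨m, hm⟩ := Nat.exists_eq_add_of_le hi.le
    have hdm := minDist_Ci_le hη hd (l := s) (e := 0) (t := m) rfl (by lia) (by lia)
      (by rw [hm]; simp)
    have hceil := nceil_le_mul_sub_of_locality_Ci hη ha hi hr
    rw [hm, Nat.add_sub_cancel_left] at hceil hsingleton
    obtain ⟨hη1, hm1⟩ := eq_one_and_eq_one_of_mul_add_two_le hη hp hpB (m := m) (by lia)
      (by lia) (by rw [← hB, hm, mul_add]; lia)
    exact ⟨hη1, by lia⟩

end Classification

theorem stmt16_general {p m : ℕ} (hp : p.Prime)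
    {F : Type} [Field F] [Fintype F] [DecidableEq F] (hcard : Fintype.card F = p ^ m)
    (s : ℕ) (hs : 2 ≤ s) (η : ℕ) (hη : 0 < η) (lam0 : F) (hlam0 : lam0 ≠ 0)
    (i : ℕ) (hi : i ≤ p ^ s) (hopt : optimalLRC (Ci p η s i lam0)) :
    (p = 2 ∧ η = 1 ∧ i = 2 ^ (s - 1) + 1) ∨
    (p ≠ 2 ∧ η = 1 ∧ i = p ^ (s - 1) + 1) ∨
    (∃ ℓ : ℕ, ℓ ≤ s - 1 ∧ i = p ^ (s - ℓ - 1)) ∨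
    (p ≠ 2 ∧ η = 1 ∧ i = 2) ∨
    (η = 1 ∧ i = p ^ s - 1) := by
  have : Fact p.Prime := ⟨hp⟩
  have : CharP F p := charP_of_card_eq_prime_pow hcard
  obtain ⟨s, rfl⟩ : ∃ t, s = t + 1 := ⟨s - 1, by lia⟩
  obtain ⟨d, r, hd, hr, hsingleton⟩ := exists_params_of_optimalLRC_Ci hη.ne' hi hopt
  have hi' := lt_pow_of_minDistIs_Ci hη.ne' hi hd
  simp only [Nat.add_sub_cancel, Nat.sub_right_comm (s + 1) _ 1]
  obtain hlt | heq | hgt := lt_trichotomy i (p ^ s)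
  · obtain hpow | htwo := eq_pow_or_eq_two_of_lt_pow hη.ne' hlam0 hlt hd hr hsingleton
    · exact Or.inr (Or.inr (Or.inl hpow))
    · exact Or.inr (Or.inr (Or.inr (Or.inl htwo)))
  · exact Or.inr (Or.inr (Or.inl ⟨0, Nat.zero_le s, heq⟩))
  · obtain rfl | hp3 := hp.two_le.eq_or_lt
    · have := eq_pow_add_one_or_eq_pow_sub_one_of_two_pow_lt hη.ne' hlam0 hgt hi' hd hr
        hsingleton
      tauto
    · have := eq_pow_add_one_or_eq_pow_sub_one_of_pow_lt hη.ne' hlam0 hp3 (by lia) hgt hi' hd hr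
        hsingleton
      have : p ≠ 2 := hp3.ne'
      tauto

/-- Suppose `x^η − λ₀` is irreducible over `F_{p^m}` and `s ≥ 2`. If
`C_i(η, p^s, λ₀)` is an optimal LRC for some `0 ≤ i ≤ p^s`, then one of the listed cases
(a)–(e) holds. -/
theorem stmt16 {p m : ℕ} (hp : p.Prime) (hm : 1 ≤ m)
    {F : Type} [Field F] [Fintype F] [DecidableEq F] (hcard : Fintype.card F = p ^ m)
    (s : ℕ) (hs : 2 ≤ s) (η : ℕ) (hη : 0 < η) (hcop : Nat.Coprime η p)
    (lam0 : F) (hlam0 : lam0 ≠ 0) (hirr : Irreducible (X ^ η - Polynomial.C lam0))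
    (i : ℕ) (hi : i ≤ p ^ s) (hopt : optimalLRC (Ci p η s i lam0)) :
    (p = 2 ∧ η = 1 ∧ i = 2 ^ (s - 1) + 1) ∨
    (p ≠ 2 ∧ η = 1 ∧ i = p ^ (s - 1) + 1) ∨
    (∃ ℓ : ℕ, ℓ ≤ s - 1 ∧ i = p ^ (s - ℓ - 1)) ∨
    (p ≠ 2 ∧ η = 1 ∧ i = 2) ∨
    (η = 1 ∧ i = p ^ s - 1) :=
  stmt16_general hp hcard s hs η hη lam0 hlam0 i hi hopt
end

section
/- Let p be a prime, m ≥ 1, s ≥ 1, η a positive integer coprime to p, λ_0 a nonzero element of F_{p^m} such that x^η − λ_0 is irreducible over F_{p^m}, and let p^{s−1} + 1 ≤ i ≤ p^s − p^{s−1}. If the code C_i(η, p^s, λ_0) is an optimal LRC, then p is odd, η = 1, and moreover if s ≥ 2 then i = p^{s−1} + 1 (while for s = 1, i may be any value with 2 ≤ i ≤ p − 1). -/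
open Polynomial

variable {F : Type} [Field F] [Fintype F] [DecidableEq F]

/-!
Let `P = p ^ (s - 1)`. Since `(X ^ η - λ₀) ^ P = X ^ (η * P) - λ₀ ^ P`, the code contains the
polynomials in `X ^ (η * P)` obtained from multiples of `(X - λ₀ ^ P) ^ b` of degree less than `p`,
where `b = ⌈i / P⌉`. The choice `(X - λ₀ ^ P) ^ b` shows that `d ≤ ⌈i / P⌉ + 1`. In degree less than
`p` these multiples form an MDS code, and this yields, for any fewer than `p - ⌊i / P⌋` positions
other than `0`, a codeword vanishing there but not at `0`; hence `r ≥ p - ⌊i / P⌋`. Inserting both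
bounds and `k = η * (p ^ s - i)` into the Singleton-like equality leaves
`η * (i - P) < ⌈i / P⌉`. The left side grows `η * P` times as fast in `i` as the right side, which
forces `η = 1`, and `i = P + 1` unless `P = 1`.
-/

section WeightBound

variable {R : Type*} [CommRing R]

lemma coeff_X_mul_derivative_sub_C_mul (h : R[X]) (v : R) (t : ℕ) :
    (X * derivative h - C v * h).coeff t = (t - v) * h.coeff t := by
  cases t with
  | zero => simp
  | succ t =>
    rw [coeff_sub, coeff_X_mul, coeff_derivative, coeff_C_mul]
    push_cast
    ring

variable [IsDomain R]

lemma support_X_mul_derivative_sub_C_mul {h : R[X]} {v : ℕ} (hv : v ∈ h.support)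
    (hinj : Set.InjOn (Nat.cast : ℕ → R) h.support) :
    (X * derivative h - C (v : R) * h).support = h.support.erase v := by
  ext t
  rw [mem_support_iff, coeff_X_mul_derivative_sub_C_mul, mul_ne_zero_iff, sub_ne_zero,
    Finset.mem_erase, ← mem_support_iff]
  exact and_congr_left fun ht => (hinj.eq_iff ht hv).not

lemma one_lt_card_support_of_isRoot {h : R[X]} {μ : R} (hμ : μ ≠ 0) (h0 : h ≠ 0)
    (hroot : h.IsRoot μ) : 1 < h.support.card := by
  by_contra! hle
  obtain ⟨t, a, rfl⟩ := card_support_le_one_iff_monomial.mp hle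
  rw [IsRoot, eval_monomial, mul_eq_zero, pow_eq_zero_iff'] at hroot
  rcases hroot with ha | ⟨hμ0, -⟩
  · exact h0 (by rw [ha, map_zero])
  · exact hμ hμ0

/-- With `v` in the support of `h`, the operator `X * d/dX - v` deletes exactly the term of degree
`v` and lowers the multiplicity of the root `μ` by at most one. -/
theorem lt_card_support_of_X_sub_C_pow_dvd {μ : R} (hμ : μ ≠ 0) {b : ℕ} {h : R[X]} (h0 : h ≠ 0)
    (hinj : Set.InjOn (Nat.cast : ℕ → R) h.support) (hdvd : (X - C μ) ^ b ∣ h) :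
    b < h.support.card := by
  induction b generalizing h with
  | zero => exact Finset.card_pos.mpr (support_nonempty.mpr h0)
  | succ b ih =>
    obtain ⟨v, hv⟩ := support_nonempty.mpr h0
    have hsupp := support_X_mul_derivative_sub_C_mul hv hinj
    set g : R[X] := X * derivative h - C (v : R) * h
    have hroot : h.IsRoot μ := dvd_iff_isRoot.mp ((dvd_pow_self _ b.succ_ne_zero).trans hdvd)
    have hcard : g.support.card + 1 = h.support.card := by
      rw [hsupp, Finset.card_erase_add_one hv]
    have hg0 : g ≠ 0 := by
      rw [← support_nonempty, ← Finset.card_pos]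
      have := one_lt_card_support_of_isRoot hμ h0 hroot
      omega
    have hgdvd : (X - C μ) ^ b ∣ g :=
      dvd_sub ((pow_sub_one_dvd_derivative_of_pow_dvd hdvd).mul_left X)
        (((pow_dvd_pow _ b.le_succ).trans hdvd).mul_left _)
    have hginj : Set.InjOn (Nat.cast : ℕ → R) g.support :=
      hinj.mono (by simp [hsupp])
    have := ih hg0 hginj hgdvd
    omega

end WeightBound

section Interpolation

variable {K : Type*} [Field K] {μ : K} {n b : ℕ}

lemma eq_zero_of_X_sub_C_pow_dvd_of_coeff_eq_zero (hμ : μ ≠ 0)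
    (hinj : Set.InjOn (Nat.cast : ℕ → K) (Set.Iio n)) {S : Finset ℕ} (hS : S ⊆ Finset.range n)
    (hcard : n ≤ S.card + b) {h : K[X]} (hdeg : h.degree < n) (hdvd : (X - C μ) ^ b ∣ h)
    (hcoeff : ∀ t ∈ S, h.coeff t = 0) : h = 0 := by
  by_contra h0
  have hlt {t : ℕ} (ht : t ∈ h.support) : t < n :=
    Nat.cast_lt.mp ((le_degree_of_mem_supp t ht).trans_lt hdeg)
  have hsub : h.support ⊆ Finset.range n \ S := fun t ht =>
    Finset.mem_sdiff.mpr ⟨Finset.mem_range.mpr (hlt ht), fun htS =>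
      mem_support_iff.mp ht (hcoeff t htS)⟩
  have hle := Finset.card_le_card hsub
  rw [Finset.card_sdiff_of_subset hS, Finset.card_range] at hle
  have := lt_card_support_of_X_sub_C_pow_dvd hμ h0 (hinj.mono fun _ => hlt) hdvd
  omega

/-- The multiples of `(X - μ) ^ b` of degree less than `n` form an MDS code of dimension `n - b`, so
any `n - b` coefficients may be prescribed. -/
theorem exists_X_sub_C_pow_dvd_coeff_eq (hμ : μ ≠ 0)
    (hinj : Set.InjOn (Nat.cast : ℕ → K) (Set.Iio n)) {S : Finset ℕ} (hS : S ⊆ Finset.range n)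
    (hcard : S.card + b = n) (v : ℕ → K) :
    ∃ h : K[X], h.degree < n ∧ (X - C μ) ^ b ∣ h ∧ ∀ t ∈ S, h.coeff t = v t := by
  have hdeg (g : degreeLT K S.card) : ((X - C μ) ^ b * (g : K[X])).degree < (n : WithBot ℕ) := by
    rw [degree_mul, degree_pow, degree_X_sub_C, nsmul_one, ← hcard, add_comm, Nat.cast_add]
    exact WithBot.add_lt_add_right (WithBot.natCast_ne_bot b) (mem_degreeLT.mp g.2)
  let L : degreeLT K S.card →ₗ[K] S → K :=
    LinearMap.pi (fun t : S => lcoeff K t) ∘ₗ LinearMap.mulLeft K ((X - C μ) ^ b) ∘ₗ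
      (degreeLT K S.card).subtype
  have hLinj : Function.Injective L := by
    rw [injective_iff_map_eq_zero]
    intro g hg
    have hzero := eq_zero_of_X_sub_C_pow_dvd_of_coeff_eq_zero hμ hinj hS hcard.ge (hdeg g)
      (dvd_mul_right _ _) fun t ht => congrFun hg ⟨t, ht⟩
    exact Subtype.ext ((mul_eq_zero.mp hzero).resolve_left ((monic_X_sub_C μ).pow b).ne_zero)
  have : FiniteDimensional K (degreeLT K S.card) := (degreeLTEquiv K S.card).symm.finiteDimensional
  have hfinrank : Module.finrank K (degreeLT K S.card) = Module.finrank K (S → K) := by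
    rw [(degreeLTEquiv K S.card).finrank_eq]
    simp
  obtain ⟨g, hg⟩ :=
    (LinearMap.injective_iff_surjective_of_finrank_eq_finrank hfinrank).mp hLinj fun t => v t
  exact ⟨_, hdeg g, dvd_mul_right _ _, fun t ht => congrFun hg ⟨t, ht⟩⟩

theorem exists_X_sub_C_pow_dvd_coeff_zero_ne_zero (hμ : μ ≠ 0)
    (hinj : Set.InjOn (Nat.cast : ℕ → K) (Set.Iio n)) {T : Finset ℕ} (hT0 : 0 ∉ T)
    (hcard : T.card + b < n) :
    ∃ h : K[X], h.degree < n ∧ (X - C μ) ^ b ∣ h ∧ h.coeff 0 ≠ 0 ∧ ∀ t ∈ T, h.coeff t = 0 := by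
  have hsub : insert 0 (T.filter (· < n)) ⊆ Finset.range n := by
    intro t ht
    simp only [Finset.mem_insert, Finset.mem_filter] at ht
    rw [Finset.mem_range]
    omega
  have hle : (insert 0 (T.filter (· < n))).card ≤ n - b := by
    have := Finset.card_insert_le 0 (T.filter (· < n))
    have := Finset.card_filter_le T (· < n)
    omega
  obtain ⟨S, hTS, hSn, hScard⟩ :=
    Finset.exists_subsuperset_card_eq hsub hle (by rw [Finset.card_range]; omega)
  obtain ⟨h, hdeg, hdvd, hval⟩ := exists_X_sub_C_pow_dvd_coeff_eq (b := b) hμ hinj hSn (by omega)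
    (fun t => if t = 0 then 1 else 0)
  refine ⟨h, hdeg, hdvd, ?_, fun t ht => ?_⟩
  · rw [hval 0 (hTS (Finset.mem_insert_self _ _))]
    simp
  · rcases lt_or_ge t n with htn | hnt
    · rw [hval t (hTS (by simp [ht, htn])), if_neg (ne_of_mem_of_not_mem ht hT0)]
    · exact coeff_eq_zero_of_degree_lt (hdeg.trans_le (Nat.cast_le.mpr hnt))

end Interpolation

section Expand

variable {R : Type*} [CommSemiring R] {M : ℕ}

lemma coeff_mul_expand {E : R[X]} (hE : E.natDegree < M) (h : R[X]) (t : ℕ) :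
    (E * expand R M h).coeff t = E.coeff (t % M) * h.coeff (t / M) := by
  have hM : 0 < M := E.natDegree.zero_le.trans_lt hE
  have hmem : (t % M, M * (t / M)) ∈ Finset.HasAntidiagonal.antidiagonal t :=
    Finset.HasAntidiagonal.mem_antidiagonal.mpr (Nat.mod_add_div t M)
  rw [coeff_mul, Finset.sum_eq_single_of_mem _ hmem, coeff_expand_mul' hM]
  rintro ⟨u, w⟩ huw hne
  rw [Finset.HasAntidiagonal.mem_antidiagonal] at huw
  rw [coeff_expand hM]
  split_ifs with hdvd
  · obtain ⟨w, rfl⟩ := hdvd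
    refine mul_eq_zero_of_left (coeff_eq_zero_of_natDegree_lt (hE.trans_le ?_)) _
    by_contra! hu
    refine hne ?_
    dsimp only at huw
    rw [← huw, Nat.add_mul_mod_self_left, Nat.mod_eq_of_lt hu, Nat.add_mul_div_left _ _ hM,
      Nat.div_eq_of_lt hu, zero_add]
  · exact mul_zero _

lemma card_support_expand_le_s18 (hM : 0 < M) (h : R[X]) :
    (expand R M h).support.card ≤ h.support.card := by
  have hsub : (expand R M h).support ⊆ h.support.image (M * ·) := by
    intro t ht
    rw [mem_support_iff, coeff_expand hM] at ht
    obtain ⟨hdvd, hcoeff⟩ := ite_ne_right_iff.mp ht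
    exact Finset.mem_image.mpr ⟨t / M, mem_support_iff.mpr hcoeff, Nat.mul_div_cancel' hdvd⟩
  exact (Finset.card_le_card hsub).trans Finset.card_image_le

end Expand

section Binomial

variable {R : Type*} [CommRing R] (p : ℕ) [ExpChar R p] {η : ℕ} (a b : ℕ) (x : R)

lemma X_pow_sub_C_pow_expChar_pow :
    (X ^ η - C x) ^ p ^ a = X ^ (η * p ^ a) - C (x ^ p ^ a) := by
  rw [sub_pow_expChar_pow, ← pow_mul, C_pow]

lemma expand_X_sub_C_pow_s18 :
    expand R (η * p ^ a) ((X - C (x ^ p ^ a)) ^ b) = (X ^ η - C x) ^ (p ^ a * b) := by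
  rw [map_pow, map_sub, expand_X, expand_C, pow_mul (X ^ η - C x), X_pow_sub_C_pow_expChar_pow]

lemma card_support_X_pow_sub_C_pow_le_s18 (hη : 0 < η) :
    ((X ^ η - C x) ^ (p ^ a * b)).support.card ≤ b + 1 := by
  have hdeg : ((X - C (x ^ p ^ a)) ^ b).natDegree ≤ b := by
    simpa using natDegree_pow_le_of_le b (natDegree_X_sub_C_le (x ^ p ^ a))
  rw [← expand_X_sub_C_pow_s18]
  calc _ ≤ ((X - C (x ^ p ^ a)) ^ b).support.card :=
        card_support_expand_le_s18 (Nat.mul_pos hη (expChar_pow_pos R p a)) _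
    _ ≤ ((X - C (x ^ p ^ a)) ^ b).natDegree + 1 := card_supp_le_succ_natDegree _
    _ ≤ b + 1 := Nat.succ_le_succ hdeg

variable {p a b x} in
lemma X_pow_sub_C_pow_dvd_expand {h : R[X]} (hdvd : (X - C (x ^ p ^ a)) ^ b ∣ h) :
    (X ^ η - C x) ^ (p ^ a * b) ∣ expand R (η * p ^ a) h := by
  obtain ⟨u, rfl⟩ := hdvd
  rw [map_mul, expand_X_sub_C_pow_s18]
  exact dvd_mul_right _ _

end Binomial

section BinomialMultiples

variable {K : Type*} [Field K] {p : ℕ} [Fact p.Prime] [CharP K p] {η a : ℕ} {x : K}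

theorem exists_X_pow_sub_C_pow_dvd_coeff_zero_ne_zero (hη : 0 < η) (hx : x ≠ 0) {b e : ℕ}
    (he : e < p ^ a) {T : Finset ℕ} (hT0 : 0 ∉ T) (hcard : T.card + b < p) :
    ∃ f : K[X], f.degree < (η * p ^ (a + 1) : ℕ) ∧ (X ^ η - C x) ^ (p ^ a * b + e) ∣ f ∧
      f.coeff 0 ≠ 0 ∧ (∀ t ∈ T, f.coeff (η * p ^ a * t) = 0) ∧
      (e = 0 → ∀ t, ¬ η * p ^ a ∣ t → f.coeff t = 0) := by
  obtain ⟨h, hdeg, hdvd, hcoeff0, hcoeffT⟩ := exists_X_sub_C_pow_dvd_coeff_zero_ne_zero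
    (pow_ne_zero (p ^ a) hx) (CharP.natCast_injOn_Iio K p) hT0 hcard
  have hEdeg : ((X ^ η - C x) ^ e).natDegree < η * p ^ a := by
    rw [natDegree_pow, natDegree_X_pow_sub_C, mul_comm]
    exact Nat.mul_lt_mul_of_pos_left he hη
  have hM : 0 < η * p ^ a := Nat.zero_lt_of_lt hEdeg
  have hf := coeff_mul_expand hEdeg h
  refine ⟨(X ^ η - C x) ^ e * expand K (η * p ^ a) h, ?_, ?_, ?_, fun t ht => ?_, ?_⟩
  · rw [degree_lt_iff_coeff_zero]
    intro t ht
    have hpt : p ≤ t / (η * p ^ a) := by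
      rwa [Nat.le_div_iff_mul_le hM, mul_comm p, mul_assoc, ← pow_succ]
    rw [hf, coeff_eq_zero_of_degree_lt (hdeg.trans_le (Nat.cast_le.mpr hpt)), mul_zero]
  · rw [add_comm, pow_add]
    exact mul_dvd_mul_left _ (X_pow_sub_C_pow_dvd_expand hdvd)
  · rw [hf, Nat.zero_mod, Nat.zero_div, coeff_zero_eq_eval_zero]
    exact mul_ne_zero (by simp [hη.ne', hx]) hcoeff0
  · rw [hf, Nat.mul_div_cancel_left t hM, hcoeffT t ht, mul_zero]
  · rintro rfl t ht
    rw [hf, pow_zero, coeff_one, if_neg (mt Nat.dvd_of_mod_eq_zero ht), zero_mul]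

/-- If all positions of `I` are multiples of `η * p ^ a`, then a multiple of
`(X ^ η - x) ^ (i % p ^ a)` whose other factor is a polynomial in `X ^ (η * p ^ a)` works.
Otherwise a polynomial in `X ^ (η * p ^ a)` vanishes for free at some position of `I`, which pays
for rounding `i` up to the next multiple of `p ^ a`. -/
theorem exists_X_pow_sub_C_pow_dvd_coeff_eq_zero (hη : 0 < η) (hx : x ≠ 0) {i : ℕ}
    {I : Finset ℕ} (hI0 : 0 ∉ I) (hcard : I.card + i / p ^ a < p) :
    ∃ f : K[X], f.degree < (η * p ^ (a + 1) : ℕ) ∧ (X ^ η - C x) ^ i ∣ f ∧ f.coeff 0 ≠ 0 ∧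
      ∀ j ∈ I, f.coeff j = 0 := by
  have hP : 0 < p ^ a := pow_pos (Fact.out : p.Prime).pos a
  set M := η * p ^ a
  set T := (I.filter (M ∣ ·)).image (· / M)
  have hT0 : 0 ∉ T := by
    simp only [T, Finset.mem_image, Finset.mem_filter, not_exists, not_and]
    rintro j ⟨hj, hdvd⟩ hj0
    exact hI0 (Nat.eq_zero_of_dvd_of_div_eq_zero hdvd hj0 ▸ hj)
  have hTcard : T.card ≤ (I.filter (M ∣ ·)).card := Finset.card_image_le
  have coeff_eq_zero {f : K[X]} (hfT : ∀ t ∈ T, f.coeff (M * t) = 0) {j : ℕ} (hj : j ∈ I)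
      (hdvd : M ∣ j) : f.coeff j = 0 := by
    have := hfT (j / M) (Finset.mem_image_of_mem _ (Finset.mem_filter.mpr ⟨hj, hdvd⟩))
    rwa [Nat.mul_div_cancel' hdvd] at this
  by_cases haligned : ∀ j ∈ I, M ∣ j
  · have := Finset.card_filter_le I (M ∣ ·)
    obtain ⟨f, hdeg, hdvd, hf0, hfT, -⟩ := exists_X_pow_sub_C_pow_dvd_coeff_zero_ne_zero (a := a)
      hη hx (Nat.mod_lt i hP) hT0 (b := i / p ^ a) (by omega)
    rw [Nat.div_add_mod] at hdvd
    exact ⟨f, hdeg, hdvd, hf0, fun j hj => coeff_eq_zero hfT hj (haligned j hj)⟩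
  · have := Finset.card_lt_card
      (Finset.filter_ssubset (p := (M ∣ ·)) |>.mpr (by simpa using haligned))
    obtain ⟨f, hdeg, hdvd, hf0, hfT, hfree⟩ := exists_X_pow_sub_C_pow_dvd_coeff_zero_ne_zero
      (a := a) hη hx hP hT0 (b := i / p ^ a + 1) (by omega)
    refine ⟨f, hdeg, (pow_dvd_pow _ (Nat.lt_mul_div_succ i hP).le).trans hdvd, hf0,
      fun j hj => ?_⟩
    by_cases hj' : M ∣ j
    · exact coeff_eq_zero hfT hj hj'
    · exact hfree rfl j hj'

end BinomialMultiples

section Code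

variable {K : Type} [Field K] {n : ℕ} {lam : K} {f g : K[X]}

lemma toFn_sum_C_mul_X_pow {R : Type*} [Semiring R] {n : ℕ} (c : Fin n → R) :
    toFn n (∑ j : Fin n, C (c j) * X ^ (j : ℕ)) = c := by
  ext j
  simp [toFn, coeff_X_pow, Fin.val_inj]

lemma sum_C_toFn_mul_X_pow {R : Type*} [Semiring R] {n : ℕ} {f : R[X]} (hf : f.degree < n) :
    ∑ j : Fin n, C (toFn n f j) * X ^ (j : ℕ) = f :=
  (sum_fin (fun j a => C a * X ^ j) (by simp) hf).trans f.sum_C_mul_X_pow_eq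

lemma mem_codeOfGen_iff_dvd (hg : g ∣ X ^ n - C lam) {c : Fin n → K} :
    c ∈ codeOfGen n lam g ↔ g ∣ ∑ j : Fin n, C (c j) * X ^ (j : ℕ) := by
  have hspan : Ideal.span {g, X ^ n - C lam} = Ideal.span {g} := by
    rw [Ideal.span_insert, sup_eq_left]
    exact Ideal.span_singleton_le_span_singleton.mpr hg
  rw [codeOfGen, Set.mem_ofPred_eq, hspan, Ideal.mem_span_singleton]

lemma toFn_mem_codeOfGen (hf : f.degree < n) (hdvd : g ∣ f) : toFn n f ∈ codeOfGen n lam g := by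
  rw [codeOfGen, Set.mem_ofPred_eq, sum_C_toFn_mul_X_pow hf]
  exact Ideal.mem_of_dvd _ hdvd (Ideal.subset_span (Set.mem_insert _ _))

lemma zero_mem_codeOfGen : 0 ∈ codeOfGen n lam g := by
  simp [codeOfGen]

theorem card_codeOfGen [Fintype K] (hg : g.Monic) (hdvd : g ∣ X ^ n - C lam)
    (hn : g.natDegree ≤ n) :
    Nat.card (codeOfGen n lam g) = Fintype.card K ^ (n - g.natDegree) := by
  have hdeg {u : K[X]} : (g * u).degree < n ↔ u.degree < (n - g.natDegree : ℕ) := by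
    rw [degree_mul, degree_eq_natDegree hg.ne_zero]
    conv_lhs => rw [← Nat.add_sub_cancel' hn, Nat.cast_add]
    exact WithBot.add_lt_add_iff_left (WithBot.natCast_ne_bot _)
  let encode (u : degreeLT K (n - g.natDegree)) : codeOfGen n lam g :=
    ⟨toFn n (g * u), toFn_mem_codeOfGen (hdeg.mpr (mem_degreeLT.mp u.2)) (dvd_mul_right _ _)⟩
  have hbij : Function.Bijective encode := by
    constructor
    · intro u w huw
      have hsum := congrArg (fun c : codeOfGen n lam g => ∑ j, C (c.1 j) * X ^ (j : ℕ)) huw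
      simp only [encode, sum_C_toFn_mul_X_pow (hdeg.mpr (mem_degreeLT.mp u.2)),
        sum_C_toFn_mul_X_pow (hdeg.mpr (mem_degreeLT.mp w.2))] at hsum
      exact Subtype.ext (mul_left_cancel₀ hg.ne_zero hsum)
    · rintro ⟨c, hc⟩
      obtain ⟨u, hu⟩ := (mem_codeOfGen_iff_dvd hdvd).mp hc
      have hdegu := hdeg.mp (hu ▸ degree_sum_fin_lt c)
      refine ⟨⟨u, mem_degreeLT.mpr hdegu⟩, Subtype.ext ?_⟩
      simp only [encode, ← hu, toFn_sum_C_mul_X_pow]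
  rw [← Nat.card_eq_of_bijective encode hbij,
    Nat.card_congr (degreeLTEquiv K (n - g.natDegree)).toEquiv]
  simp

lemma hammingNorm_toFn_le {R : Type*} [Semiring R] [DecidableEq R] (n : ℕ) (f : R[X]) :
    hammingNorm (toFn n f) ≤ f.support.card :=
  Finset.card_le_card_of_injOn Fin.val (fun _ hj => mem_support_iff.mpr (Finset.mem_filter.mp hj).2)
    Fin.val_injective.injOn

theorem minDistIs_codeOfGen_le [DecidableEq K] {d : ℕ} (hd : minDistIs (codeOfGen n lam g) d)
    (hf : f.degree < n) (hf0 : f ≠ 0) (hdvd : g ∣ f) : d ≤ f.support.card := by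
  have hne : toFn n f ≠ 0 := by
    intro hzero
    apply hf0
    rw [← sum_C_toFn_mul_X_pow hf, hzero]
    simp
  exact (hd.2 ⟨_, toFn_mem_codeOfGen hf hdvd, hne, rfl⟩).trans (hammingNorm_toFn_le n f)

theorem le_of_symbolLocality {F : Type} [Zero F] {n : ℕ} {Cset : Set (Fin n → F)} {j : Fin n}
    {r γ : ℕ} (hr : symbolLocality Cset j r) (hzero : 0 ∈ Cset)
    (hword : ∀ I : Finset (Fin n), j ∉ I → I.card < γ →
      ∃ c ∈ Cset, c j ≠ 0 ∧ ∀ l ∈ I, c l = 0) : γ ≤ r := by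
  obtain ⟨I, hjI, hcard, recover, hrecover⟩ := hr
  by_contra! hlt
  obtain ⟨c, hc, hcj, hcI⟩ := hword I hjI (hcard.trans_lt hlt)
  have hrestrict : (fun l : {l // l ∈ I} => c l) = fun _ => 0 := funext fun l => hcI l l.2
  apply hcj
  rw [hrecover c hc, hrestrict]
  exact (hrecover 0 hzero).symm

end Code

section Ci

variable {p : ℕ} [Fact p.Prime] {F : Type} [Field F] [CharP F p] {η a i : ℕ} {lam0 : F}

theorem card_Ci [Fintype F] {s : ℕ} (hη : 0 < η) (hi : i ≤ p ^ s) :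
    Nat.card (Ci p η s i lam0) = Fintype.card F ^ (η * (p ^ s - i)) := by
  have hdeg : ((X ^ η - C lam0) ^ i).natDegree = η * i := by
    rw [natDegree_pow, natDegree_X_pow_sub_C, mul_comm]
  have hdvd : (X ^ η - C lam0) ^ i ∣ X ^ (η * p ^ s) - C (lam0 ^ p ^ s) := by
    rw [← X_pow_sub_C_pow_expChar_pow]
    exact pow_dvd_pow _ hi
  rw [Ci, card_codeOfGen ((monic_X_pow_sub_C lam0 hη.ne').pow i) hdvd
    (hdeg ▸ Nat.mul_le_mul_left η hi), hdeg, Nat.mul_sub]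

theorem minDistIs_Ci_le [DecidableEq F] (hη : 0 < η) (hi : i ≤ p ^ a * (p - 1)) {d : ℕ}
    (hd : minDistIs (Ci p η (a + 1) i lam0) d) : d ≤ i ⌈/⌉ p ^ a + 1 := by
  have hp := (Fact.out : p.Prime).pos
  have hP : 0 < p ^ a := pow_pos hp a
  have hceil : i ⌈/⌉ p ^ a < p := Nat.lt_of_le_pred hp ((ceilDiv_le_iff_le_mul hP).mpr hi)
  have hmonic := (monic_X_pow_sub_C lam0 hη.ne').pow (p ^ a * (i ⌈/⌉ p ^ a))
  have hdeg : ((X ^ η - C lam0) ^ (p ^ a * (i ⌈/⌉ p ^ a))).degree <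
      ((η * p ^ (a + 1) : ℕ) : WithBot ℕ) := by
    rw [degree_eq_natDegree hmonic.ne_zero, natDegree_pow, natDegree_X_pow_sub_C, Nat.cast_lt,
      mul_comm η, pow_succ]
    gcongr
  have hdvd : (X ^ η - C lam0) ^ i ∣ (X ^ η - C lam0) ^ (p ^ a * (i ⌈/⌉ p ^ a)) :=
    pow_dvd_pow _ (le_smul_ceilDiv hP)
  exact (minDistIs_codeOfGen_le hd hdeg hmonic.ne_zero hdvd).trans
    (card_support_X_pow_sub_C_pow_le_s18 p a _ lam0 hη)

theorem sub_div_le_of_hasAllSymbolLocality_Ci (hη : 0 < η) (hlam0 : lam0 ≠ 0) {r : ℕ}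
    (hr : hasAllSymbolLocality (Ci p η (a + 1) i lam0) r) : p - i / p ^ a ≤ r := by
  have hn : 0 < η * p ^ (a + 1) := Nat.mul_pos hη (pow_pos (Fact.out : p.Prime).pos _)
  refine le_of_symbolLocality (hr ⟨0, hn⟩) zero_mem_codeOfGen fun I hI0 hcard => ?_
  have hmap0 : 0 ∉ I.map Fin.valEmbedding := fun h0 => hI0 ((Finset.mem_map' _).mp h0)
  obtain ⟨f, hdeg, hdvd, hf0, hfI⟩ := exists_X_pow_sub_C_pow_dvd_coeff_eq_zero (a := a) (i := i)
    hη hlam0 hmap0 (by rw [Finset.card_map]; omega)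
  exact ⟨_, toFn_mem_codeOfGen hdeg hdvd, hf0,
    fun l hl => hfI l (Finset.mem_map_of_mem Fin.valEmbedding hl)⟩

/-- The Singleton-like bound reads `d = η * i - ⌈k / r⌉ + 2`, where `d ≤ ⌈i / p ^ a⌉ + 1`, and
`⌈k / r⌉ ≤ η * p ^ a` since `k = η * (p ^ (a + 1) - i)` and `r ≥ p - ⌊i / p ^ a⌋`. -/
theorem mul_lt_of_optimalLRC_Ci [Fintype F] [DecidableEq F] (hη : 0 < η) (hlam0 : lam0 ≠ 0)
    (hi : i ≤ p ^ a * (p - 1)) (hopt : optimalLRC (Ci p η (a + 1) i lam0)) :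
    η * i < η * p ^ a + i ⌈/⌉ p ^ a := by
  obtain ⟨k, d, r, hk, hd, hr, hsingleton⟩ := hopt
  have hp := (Fact.out : p.Prime).pos
  have hip : i ≤ p ^ (a + 1) := by
    rw [pow_succ]
    exact hi.trans (Nat.mul_le_mul_left _ p.pred_le)
  have hkeq : k = η * (p ^ (a + 1) - i) := by
    rw [card_Ci hη hip] at hk
    exact (Nat.pow_right_injective Fintype.one_lt_card hk).symm
  have hdle := minDistIs_Ci_le hη hi hd
  have hrle := sub_div_le_of_hasAllSymbolLocality_Ci hη hlam0 hr.1
  have hr0 : 0 < r := by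
    have : i / p ^ a ≤ p - 1 := Nat.div_le_of_le_mul hi
    omega
  have hkr : k ≤ r * (η * p ^ a) := calc
    k = η * (p ^ a * p - i) := by rw [hkeq, pow_succ]
    _ ≤ η * (p ^ a * p - p ^ a * (i / p ^ a)) := by gcongr; exact Nat.mul_div_le i _
    _ = (p - i / p ^ a) * (η * p ^ a) := by rw [← Nat.mul_sub]; ring
    _ ≤ r * (η * p ^ a) := by gcongr
  have hceil : nceil k r ≤ η * p ^ a := (ceilDiv_le_iff_le_mul hr0).mpr hkr
  have hηi : η * i ≤ η * p ^ (a + 1) := Nat.mul_le_mul_left η hip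
  rw [Nat.mul_sub] at hkeq
  omega

end Ci

lemma eq_one_of_mul_lt_mul_add_ceilDiv {η P i : ℕ} (hη : 0 < η) (hP : 0 < P) (hi : P < i)
    (hlt : η * i < η * P + i ⌈/⌉ P) : η = 1 ∧ (1 < P → i = P + 1) := by
  obtain ⟨j, rfl⟩ := Nat.exists_eq_add_of_lt hi
  have hceil : 1 < (P + j + 1) ⌈/⌉ P := by
    rw [← not_le, ceilDiv_le_iff_le_mul hP]
    omega
  obtain ⟨e, he⟩ := Nat.exists_eq_add_of_lt hceil
  have hPe : P * e ≤ j := by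
    have : ¬ (P + j + 1) ⌈/⌉ P ≤ e + 1 := by omega
    rw [ceilDiv_le_iff_le_mul hP, Nat.mul_succ] at this
    omega
  have hηj : η * (j + 1) ≤ e + 1 := by
    have : η * (P + j + 1) = η * P + η * (j + 1) := by ring
    omega
  have hej : e ≤ P * e := Nat.le_mul_of_pos_left e hP
  have hη1 : η ≤ 1 := Nat.le_of_mul_le_mul_right (by omega : η * (j + 1) ≤ 1 * (j + 1)) j.succ_pos
  obtain rfl : η = 1 := by omega
  refine ⟨rfl, fun hP1 => ?_⟩
  have : 2 * e ≤ P * e := Nat.mul_le_mul_right e hP1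
  omega

theorem stmt18_general {p : ℕ} [Fact p.Prime] {F : Type} [Field F] [Fintype F] [DecidableEq F]
    [CharP F p] {a η i : ℕ} (hη : 0 < η) {lam0 : F} (hlam0 : lam0 ≠ 0) (hi1 : p ^ a + 1 ≤ i)
    (hi2 : i ≤ p ^ (a + 1) - p ^ a) (hopt : optimalLRC (Ci p η (a + 1) i lam0)) :
    p ≠ 2 ∧ η = 1 ∧ (1 ≤ a → i = p ^ a + 1) := by
  have hp : p.Prime := Fact.out
  have hi : i ≤ p ^ a * (p - 1) := by rwa [Nat.mul_sub, mul_one, ← pow_succ]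
  obtain ⟨hη1, hieq⟩ := eq_one_of_mul_lt_mul_add_ceilDiv hη (pow_pos hp.pos a) hi1
    (mul_lt_of_optimalLRC_Ci hη hlam0 hi hopt)
  refine ⟨?_, hη1, fun ha => hieq (Nat.one_lt_pow (by omega) hp.one_lt)⟩
  rintro rfl
  omega

/-- Suppose `x^η − λ₀` is irreducible over `F_{p^m}`, `s ≥ 1` and
`p^{s−1} + 1 ≤ i ≤ p^s − p^{s−1}`. If `C_i(η, p^s, λ₀)` is an optimal LRC, then `p` is odd,
`η = 1`, and moreover if `s ≥ 2` then `i = p^{s−1} + 1`. -/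
theorem stmt18 {p m : ℕ} (hp : p.Prime) (hm : 1 ≤ m)
    {F : Type} [Field F] [Fintype F] [DecidableEq F] (hcard : Fintype.card F = p ^ m)
    (s : ℕ) (hs : 1 ≤ s) (η : ℕ) (hη : 0 < η) (hcop : Nat.Coprime η p)
    (lam0 : F) (hlam0 : lam0 ≠ 0) (hirr : Irreducible (X ^ η - Polynomial.C lam0))
    (i : ℕ) (hi1 : p ^ (s - 1) + 1 ≤ i) (hi2 : i ≤ p ^ s - p ^ (s - 1))
    (hopt : optimalLRC (Ci p η s i lam0)) :
    p ≠ 2 ∧ η = 1 ∧ (2 ≤ s → i = p ^ (s - 1) + 1) := by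
  have : Fact p.Prime := ⟨hp⟩
  have : CharP F p := charP_of_card_eq_prime_pow hcard
  obtain ⟨a, rfl⟩ := Nat.exists_eq_add_of_le' hs
  simpa using stmt18_general hη hlam0 hi1 hi2 hopt
end
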